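/- arXiv:1807.08899 — 3 statements merged into one kernel-verified Lean document; each statement's English description precedes it below -/
import Mathlib

section
/- Define a_n = (−1)^n / √(n·log n) for n ≥ 4 (where log is the natural logarithm). Then the partial sums ∑_{n=4}^{N} a_n converge to a finite limit as N → ∞, while the partial sums ∑_{n=4}^{N} log(1 + a_n) diverge to −∞; in particular, the partial products ∏_{n=4}^{N} (1 + a_n) tend to 0 as N → ∞. -/
open Filter

/-!
The inequality `log (1 + x) ≤ x - (x / (x + 2)) ^ 2` has a quadratic loss, so if `∑ aₙ` stays
bounded while `∑ aₙ²` diverges, then `∑ log (1 + aₙ)` is driven to `-∞`. For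
`aₙ = (-1)ⁿ / √(n log n)` the first series converges by the Leibniz test, and
`∑ aₙ² = ∑ 1 / (n log n)` diverges by Cauchy condensation, which turns it into a multiple of the
harmonic series.
-/

section LogSums

lemma log_one_add_le_sub_sq {x : ℝ} (hx : -1 < x) :
    Real.log (1 + x) ≤ x - (x / (x + 2)) ^ 2 := by
  have hx₁ : 0 < 1 + x := by linarith
  have hx₂ : 0 < 1 + x / 2 := by linarith
  have hx₃ : x + 2 ≠ 0 := by linarith
  -- Splitting off `(1 + x / 2) ^ 2` leaves a quotient that is `1` up to second order.
  calc Real.log (1 + x)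
      = Real.log ((1 + x / 2) ^ 2 * ((1 + x) / (1 + x / 2) ^ 2)) := by
        rw [mul_div_cancel₀ _ (by positivity)]
    _ = 2 * Real.log (1 + x / 2) + Real.log ((1 + x) / (1 + x / 2) ^ 2) := by
        rw [Real.log_mul (by positivity) (by positivity), Real.log_pow, Nat.cast_ofNat]
    _ ≤ 2 * (1 + x / 2 - 1) + ((1 + x) / (1 + x / 2) ^ 2 - 1) := by
        gcongr <;> exact Real.log_le_sub_one_of_pos (by positivity)
    _ = x - (x / (x + 2)) ^ 2 := by
        have : 1 + x / 2 = (x + 2) / 2 := by ring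
        rw [this]
        field_simp
        ring

variable {ι α : Type*} {l : Filter ι} {s : ι → Finset α}

lemma tendsto_sum_log_one_add_atBot {a : α → ℝ} {C : ℝ}
    (hlower : ∀ i, ∀ n ∈ s i, -1 < a n) (hupper : ∀ i, ∀ n ∈ s i, a n ≤ C)
    (hsum : l.IsBoundedUnder (· ≤ ·) fun i => ∑ n ∈ s i, a n)
    (hsq : Tendsto (fun i => ∑ n ∈ s i, a n ^ 2) l atTop) :
    Tendsto (fun i => ∑ n ∈ s i, Real.log (1 + a n)) l atBot := by
  have hterm : ∀ i, ∀ n ∈ s i, Real.log (1 + a n) ≤ a n + -(a n ^ 2 / (|C| + 2) ^ 2) := by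
    intro i n hn
    have hpos : 0 < a n + 2 := by linarith [hlower i n hn]
    have hle : a n ≤ |C| := (hupper i n hn).trans (le_abs_self C)
    calc Real.log (1 + a n)
        ≤ a n - (a n / (a n + 2)) ^ 2 := log_one_add_le_sub_sq (hlower i n hn)
      _ = a n + -(a n ^ 2 / (a n + 2) ^ 2) := by rw [div_pow, sub_eq_add_neg]
      _ ≤ a n + -(a n ^ 2 / (|C| + 2) ^ 2) := by gcongr
  have hbound : ∀ i, ∑ n ∈ s i, Real.log (1 + a n) ≤
      ∑ n ∈ s i, a n + -((∑ n ∈ s i, a n ^ 2) / (|C| + 2) ^ 2) := fun i => by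
    simpa only [Finset.sum_add_distrib, Finset.sum_neg_distrib, Finset.sum_div] using
      Finset.sum_le_sum (hterm i)
  have hloss : Tendsto (fun i => -((∑ n ∈ s i, a n ^ 2) / (|C| + 2) ^ 2)) l atBot :=
    tendsto_neg_atTop_atBot.comp (hsq.atTop_div_const (by positivity))
  obtain ⟨B, hB⟩ := hsum
  exact tendsto_atBot_mono hbound
    (tendsto_atBot_add_left_of_ge' l B (eventually_map.1 hB) hloss)

lemma tendsto_prod_zero_of_tendsto_sum_log_atBot {u : α → ℝ} (hpos : ∀ i, ∀ n ∈ s i, 0 < u n)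
    (hlog : Tendsto (fun i => ∑ n ∈ s i, Real.log (u n)) l atBot) :
    Tendsto (fun i => ∏ n ∈ s i, u n) l (nhds 0) := by
  refine (Real.tendsto_exp_atBot.comp hlog).congr fun i => ?_
  rw [Function.comp_apply, Real.exp_sum]
  exact Finset.prod_congr rfl fun n hn => Real.exp_log (hpos i n hn)

end LogSums

section TailSums

lemma tendsto_sum_Icc_of_tendsto_sum_range {M : Type*} [AddCommMonoid M] {f : ℕ → M} {m : ℕ}
    {l : Filter M} (h : Tendsto (fun N => ∑ k ∈ Finset.range N, f (m + k)) atTop l) :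
    Tendsto (fun N => ∑ n ∈ Finset.Icc m N, f n) atTop l := by
  have hshift : Tendsto (fun N => N + 1 - m) atTop atTop :=
    (tendsto_sub_atTop_nat m).comp (tendsto_add_atTop_nat 1)
  refine (h.comp hshift).congr fun N => ?_
  rw [Function.comp_apply, ← Finset.sum_Ico_eq_sum_range, Finset.Ico_add_one_right_eq_Icc]

lemma tendsto_sum_Icc_atTop_of_not_summable {f : ℕ → ℝ} (hf : ∀ n, 0 ≤ f n) (hsum : ¬Summable f)
    (m : ℕ) : Tendsto (fun N => ∑ n ∈ Finset.Icc m N, f n) atTop atTop := by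
  refine tendsto_sum_Icc_of_tendsto_sum_range ?_
  rw [← not_summable_iff_tendsto_nat_atTop_of_nonneg fun k => hf (m + k)]
  simpa only [add_comm m, summable_nat_add_iff] using hsum

lemma exists_tendsto_sum_Icc_alternating {b : ℕ → ℝ} {m : ℕ} (hb : AntitoneOn b (Set.Ici m))
    (hb₀ : Tendsto b atTop (nhds 0)) :
    ∃ L, Tendsto (fun N => ∑ n ∈ Finset.Icc m N, (-1) ^ n * b n) atTop (nhds L) := by
  have hshift : Antitone fun k => b (m + k) := fun j k hjk =>
    hb (Nat.le_add_right m j) (Nat.le_add_right m k) (Nat.add_le_add_left hjk m)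
  have hshift₀ : Tendsto (fun k => b (m + k)) atTop (nhds 0) := by
    simpa only [add_comm m] using (tendsto_add_atTop_iff_nat m).2 hb₀
  obtain ⟨L, hL⟩ := hshift.tendsto_alternating_series_of_tendsto_zero hshift₀
  refine ⟨(-1) ^ m * L, tendsto_sum_Icc_of_tendsto_sum_range ?_⟩
  simpa only [pow_add, mul_assoc, Finset.mul_sum] using hL.const_mul ((-1) ^ m)

end TailSums

section MulLog

lemma antitoneOn_inv_mul_log : AntitoneOn (fun x : ℝ => (x * Real.log x)⁻¹) (Set.Ioi 1) := by
  intro x hx y hy hxy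
  have hmem : ∀ z ∈ Set.Ioi (1 : ℝ), z ∈ Set.Ici (Real.exp (-1)) := fun z hz =>
    (Real.exp_le_one_iff.2 (by norm_num)).trans (Set.mem_Ioi.1 hz).le
  exact inv_anti₀ (Real.mul_log_pos hx)
    (Real.mul_log_strictMonoOn.monotoneOn (hmem x hx) (hmem y hy) hxy)

lemma antitoneOn_inv_natCast_mul_log :
    AntitoneOn (fun n : ℕ => ((n : ℝ) * Real.log n)⁻¹) (Set.Ici 2) := fun _ hm _ hn hmn =>
  antitoneOn_inv_mul_log (Set.mem_Ioi.2 (Nat.one_lt_cast.2 hm))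
    (Set.mem_Ioi.2 (Nat.one_lt_cast.2 hn)) (Nat.cast_le.2 hmn)

lemma inv_natCast_mul_log_nonneg (n : ℕ) : 0 ≤ ((n : ℝ) * Real.log n)⁻¹ :=
  inv_nonneg.2 (mul_nonneg n.cast_nonneg (Real.log_natCast_nonneg n))

lemma not_summable_inv_natCast_mul_log : ¬Summable fun n : ℕ => ((n : ℝ) * Real.log n)⁻¹ := by
  have hanti : ∀ᶠ n : ℕ in atTop,
      (((n + 1 : ℕ) : ℝ) * Real.log (n + 1 : ℕ))⁻¹ ≤ ((n : ℝ) * Real.log n)⁻¹ := by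
    filter_upwards [eventually_ge_atTop 2] with n hn
    exact antitoneOn_inv_natCast_mul_log hn (Nat.le_succ_of_le hn) n.le_succ
  have hcondensed (k : ℕ) : (2 : ℝ) ^ k * (((2 ^ k : ℕ) : ℝ) * Real.log (2 ^ k : ℕ))⁻¹ =
      (k : ℝ)⁻¹ * (Real.log 2)⁻¹ := by
    rw [Nat.cast_pow, Nat.cast_ofNat, Real.log_pow, mul_inv, mul_inv,
      mul_inv_cancel_left₀ (by positivity)]
  rw [← summable_condensed_iff_of_eventually_nonneg
    (Eventually.of_forall inv_natCast_mul_log_nonneg) hanti]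
  simp only [hcondensed]
  rw [summable_mul_right_iff (inv_ne_zero (Real.log_pos one_lt_two).ne')]
  exact Real.not_summable_natCast_inv

lemma one_lt_natCast_mul_log {n : ℕ} (hn : 2 ≤ n) : 1 < (n : ℝ) * Real.log n := by
  have hn' : (2 : ℝ) ≤ n := Nat.ofNat_le_cast.2 hn
  calc (1 : ℝ) ≤ n - 1 := by linarith
    _ < n * Real.log n := Real.self_sub_one_lt_mul_log (by positivity) (by linarith)

lemma tendsto_inv_natCast_mul_log :
    Tendsto (fun n : ℕ => ((n : ℝ) * Real.log n)⁻¹) atTop (nhds 0) :=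
  ((tendsto_id.atTop_mul_atTop₀ Real.tendsto_log_atTop).comp
    tendsto_natCast_atTop_atTop).inv_tendsto_atTop

end MulLog

section AlternatingTerm

lemma abs_neg_one_pow_div_sqrt_lt_one {x : ℝ} (hx : 1 < x) (n : ℕ) : |(-1) ^ n / √x| < 1 := by
  rw [abs_div, abs_neg_one_pow, abs_of_nonneg x.sqrt_nonneg]
  exact (div_lt_one (by positivity)).2 (Real.lt_sqrt_of_sq_lt (by rwa [one_pow]))

lemma neg_one_pow_div_sqrt_sq {x : ℝ} (hx : 0 ≤ x) (n : ℕ) : ((-1) ^ n / √x) ^ 2 = x⁻¹ := by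
  rw [div_pow, Real.sq_sqrt hx, ← pow_mul, (even_two.mul_left n).neg_one_pow, one_div]

lemma exists_tendsto_sum_Icc_neg_one_pow_div_sqrt_mul_log {m : ℕ} (hm : 2 ≤ m) :
    ∃ L : ℝ, Tendsto (fun N => ∑ n ∈ Finset.Icc m N, (-1 : ℝ) ^ n / √(n * Real.log n))
      atTop (nhds L) := by
  have hanti : AntitoneOn (fun n : ℕ => √((n * Real.log n)⁻¹)) (Set.Ici m) := fun _ hj _ hk hjk =>
    Real.sqrt_le_sqrt (antitoneOn_inv_natCast_mul_log (hm.trans hj) (hm.trans hk) hjk)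
  have hlim : Tendsto (fun n : ℕ => √((n * Real.log n)⁻¹)) atTop (nhds 0) := by
    simpa only [Real.sqrt_zero] using tendsto_inv_natCast_mul_log.sqrt
  simpa only [Real.sqrt_inv, ← div_eq_mul_inv] using exists_tendsto_sum_Icc_alternating hanti hlim

lemma tendsto_sum_Icc_sq_neg_one_pow_div_sqrt_mul_log (m : ℕ) :
    Tendsto (fun N => ∑ n ∈ Finset.Icc m N, ((-1 : ℝ) ^ n / √(n * Real.log n)) ^ 2)
      atTop atTop := by
  simpa only [neg_one_pow_div_sqrt_sq (inv_nonneg.1 (inv_natCast_mul_log_nonneg _))] using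
    tendsto_sum_Icc_atTop_of_not_summable inv_natCast_mul_log_nonneg
      not_summable_inv_natCast_mul_log m

end AlternatingTerm

/-- With `aₙ = (−1)ⁿ/√(n log n)` for `n ≥ 4`, the partial sums `∑ aₙ` converge,
the partial sums `∑ log(1+aₙ)` diverge to `−∞`, and the partial products
`∏ (1+aₙ)` tend to `0`. -/
theorem counterexample_sum_converges_prod_diverges :
    (∃ L : ℝ, Tendsto
        (fun N : ℕ => ∑ n ∈ Finset.Icc 4 N, ((-1 : ℝ) ^ n / Real.sqrt (n * Real.log n)))
        atTop (nhds L)) ∧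
    Tendsto
        (fun N : ℕ => ∑ n ∈ Finset.Icc 4 N,
          Real.log (1 + (-1 : ℝ) ^ n / Real.sqrt (n * Real.log n)))
        atTop atBot ∧
    Tendsto
        (fun N : ℕ => ∏ n ∈ Finset.Icc 4 N, (1 + (-1 : ℝ) ^ n / Real.sqrt (n * Real.log n)))
        atTop (nhds 0) := by
  have hsmall (N n : ℕ) (hn : n ∈ Finset.Icc 4 N) : |(-1 : ℝ) ^ n / √(n * Real.log n)| < 1 :=
    abs_neg_one_pow_div_sqrt_lt_one
      (one_lt_natCast_mul_log (le_trans (by norm_num) (Finset.mem_Icc.1 hn).1)) n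
  have hlower (N n : ℕ) (hn : n ∈ Finset.Icc 4 N) : -1 < (-1 : ℝ) ^ n / √(n * Real.log n) :=
    (abs_lt.1 (hsmall N n hn)).1
  have hupper (N n : ℕ) (hn : n ∈ Finset.Icc 4 N) : (-1 : ℝ) ^ n / √(n * Real.log n) ≤ 1 :=
    (abs_lt.1 (hsmall N n hn)).2.le
  obtain ⟨L, hL⟩ := exists_tendsto_sum_Icc_neg_one_pow_div_sqrt_mul_log (m := 4) (by norm_num)
  have hlog := tendsto_sum_log_one_add_atBot hlower hupper hL.isBoundedUnder_le
    (tendsto_sum_Icc_sq_neg_one_pow_div_sqrt_mul_log 4)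
  exact ⟨⟨L, hL⟩, hlog, tendsto_prod_zero_of_tendsto_sum_log_atBot
    (fun N n hn => neg_lt_iff_pos_add'.1 (hlower N n hn)) hlog⟩
end

section
/- Prime Number Theorem for Arithmetic Progressions: if a and b are relatively prime natural numbers and π_{a,b}(x) denotes the number of primes p ≤ x with p ≡ b (mod a), then π_{a,b}(x) ∼ Li(x)/φ(a) as x → ∞; that is, π_{a,b}(x) divided by (1/φ(a))·∫₂^x dt/log t tends to 1. -/
open Filter

/-! Nonvanishing of Dirichlet `L`-functions on `Re s = 1` extends the Dirichlet series of `Λ`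
restricted to the class of `b` mod `a`, minus `φ(a)⁻¹ / (s - 1)`, continuously to `Re s ≥ 1`. The
Wiener–Ikehara theorem turns this into `∑_{n ≤ x, n ≡ b} Λ n ∼ x / φ(a)`.

For Wiener–Ikehara, write the partial sums as `S u * e^u` with `u = log x`, so that the Dirichlet
series becomes the Laplace transform of `S`. Averages of `S - c` against the Fourier transform of a
compactly supported `φ` are then Fourier transforms of the boundary function times `φ`, and tend to
`0` by the Riemann–Lebesgue lemma. A positive such kernel exists (`|𝓕 η|²`, the transform of `η`
convolved with its conjugate reflection), and since `S u * e^u` is increasing, `S` varies so little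
on short intervals that the averages may be unsmoothed.

Chebyshev's estimates finally lead from `ψ` to `θ` to `π` within the residue class, because the
differences `ψ - θ` and `π - θ / log` are sums of nonnegative terms, so those over the class are at
most those over all primes. -/

open Topology MeasureTheory FourierTransform Convolution ComplexConjugate RealInnerProductSpace

section FourierTransform

variable {V E : Type*} [NormedAddCommGroup V] [InnerProductSpace ℝ V] [MeasurableSpace V]
  [BorelSpace V] [FiniteDimensional ℝ V] [NormedAddCommGroup E] [NormedSpace ℂ E]

lemma fourier_fourierChar_smul (f : V → E) (v w : V) :
    𝓕 (fun x => 𝐞 ⟪x, v⟫ • f x) w = 𝓕 f (w - v) := by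
  simp only [Real.fourier_eq, smul_smul, ← AddChar.map_add_eq_mul, inner_sub_right, neg_sub,
    neg_add_eq_sub]

lemma fourier_comp_div (f : ℝ → E) {l : ℝ} (hl : l ≠ 0) (w : ℝ) :
    𝓕 (fun x => f (x / l)) w = |l| • 𝓕 f (l * w) := by
  rw [Real.fourier_real_eq, Real.fourier_real_eq, ← Measure.integral_comp_div _ l]
  refine integral_congr_ae (.of_forall fun x => ?_)
  simp only [← mul_assoc, div_mul_cancel₀ x hl]

lemma fourier_conj_comp_neg (f : V → ℂ) (w : V) :
    𝓕 (fun x => conj (f (-x))) w = conj (𝓕 f w) := by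
  rw [Real.fourier_eq, ← integral_neg_eq_self, Real.fourier_eq, ← integral_conj]
  simp [Circle.smul_def]

lemma fourier_convolution_conj_comp_neg {f : V → ℂ} (hf : Integrable f) (w : V) :
    𝓕 (f ⋆[ContinuousLinearMap.mul ℂ ℂ] fun x => conj (f (-x))) w = ((‖𝓕 f w‖ ^ 2 : ℝ) : ℂ) := by
  have hf' : Integrable fun x => conj (f (-x)) :=
    (Complex.conjLIE.integrable_comp_iff (φ := fun x => f (-x))).2 hf.comp_neg
  rw [Real.fourier_mul_convolution_eq hf hf', fourier_conj_comp_neg, Complex.mul_conj,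
    Complex.normSq_eq_norm_sq]

end FourierTransform

section Kernel

/-- A Fejér-type kernel on the real line: a nonnegative density of total mass `1` whose spectrum is
bounded, in the sense that it is the Fourier transform of a compactly supported continuous
function. -/
structure IsFejerKernel (K : ℝ → ℝ) : Prop where
  nonneg : ∀ u, 0 ≤ K u
  integrable : Integrable K
  integral_eq_one : ∫ u, K u = 1
  exists_fourier_eq : ∃ φ : ℝ → ℂ, Continuous φ ∧ HasCompactSupport φ ∧ ∀ u, 𝓕 φ u = K u

lemma IsFejerKernel.rescale {K : ℝ → ℝ} (hK : IsFejerKernel K) {l : ℝ} (hl : 0 < l) :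
    IsFejerKernel fun u => l * K (l * u) where
  nonneg u := mul_nonneg hl.le (hK.nonneg _)
  integrable := (hK.integrable.comp_mul_left' hl.ne').const_mul l
  integral_eq_one := by
    rw [integral_const_mul, Measure.integral_comp_mul_left, hK.integral_eq_one,
      abs_of_pos (inv_pos.2 hl), smul_eq_mul, mul_one, mul_inv_cancel₀ hl.ne']
  exists_fourier_eq := by
    obtain ⟨φ, hφc, hφs, hφK⟩ := hK.exists_fourier_eq
    refine ⟨fun x => φ (x / l), by fun_prop,
      by simpa [Function.comp_def, div_eq_mul_inv] using
        hφs.comp_homeomorph (Homeomorph.mulRight₀ l⁻¹ (inv_ne_zero hl.ne')), fun u => ?_⟩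
    rw [fourier_comp_div φ hl.ne', hφK, abs_of_pos hl, Complex.real_smul, Complex.ofReal_mul]

open scoped SchwartzMap in
lemma isFejerKernel_norm_sq_fourier {η : 𝓢(ℝ, ℂ)} (hη : HasCompactSupport η)
    (h1 : ∫ x, ‖η x‖ ^ 2 = 1) : IsFejerKernel fun u => ‖𝓕 η u‖ ^ 2 where
  nonneg u := by positivity
  integrable := ((𝓕 η).memLp 2).integrable_norm_pow two_ne_zero
  integral_eq_one := by rw [SchwartzMap.integral_norm_sq_fourier, h1]
  exists_fourier_eq := by
    have hconj : HasCompactSupport fun x => conj (η (-x)) :=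
      (hη.comp_homeomorph (Homeomorph.neg ℝ)).comp_left (g := conj) (map_zero _)
    refine ⟨η ⋆[ContinuousLinearMap.mul ℂ ℂ] fun x => conj (η (-x)),
      hconj.continuous_convolution_right _ η.integrable.locallyIntegrable (by fun_prop),
      hη.convolution _ hconj, fun u => ?_⟩
    rw [fourier_convolution_conj_comp_neg η.integrable, SchwartzMap.fourier_coe]

open scoped SchwartzMap in
lemma exists_schwartzMap_integral_norm_sq_eq_one :
    ∃ η : 𝓢(ℝ, ℂ), HasCompactSupport η ∧ ∫ x, ‖η x‖ ^ 2 = 1 := by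
  obtain ⟨f⟩ : Nonempty (ContDiffBump (0 : ℝ)) := inferInstance
  have hfs : HasCompactSupport fun x => (f x : ℂ) :=
    f.hasCompactSupport.comp_left (g := Complex.ofReal) Complex.ofReal_zero
  have hfd : ContDiff ℝ (⊤ : ℕ∞) fun x => (f x : ℂ) :=
    Complex.ofRealCLM.contDiff.comp f.contDiff
  let η : 𝓢(ℝ, ℂ) := hfs.toSchwartzMap hfd
  have hηf : ∀ x, η x = f x := fun x => rfl
  have hηs : HasCompactSupport η := hfs
  have hη0 : ‖η 0‖ ^ 2 ≠ 0 := by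
    rw [hηf, f.one_of_mem_closedBall (Metric.mem_closedBall_self f.rIn_pos.le)]
    simp
  have hpos : 0 < ∫ x, ‖η x‖ ^ 2 :=
    (by fun_prop : Continuous fun x => ‖η x‖ ^ 2).integral_pos_of_hasCompactSupport_nonneg_nonzero
      (hηs.norm.comp_left (g := (· ^ 2)) (zero_pow two_ne_zero)) (fun x => by positivity) hη0
  refine ⟨((√(∫ x, ‖η x‖ ^ 2))⁻¹ : ℂ) • η, hηs.smul_left (f := fun _ => _), ?_⟩
  simp [mul_pow, integral_const_mul, hpos.le, hpos.ne']

lemma exists_isFejerKernel : ∃ K, IsFejerKernel K :=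
  let ⟨_, hη, h1⟩ := exists_schwartzMap_integral_norm_sq_eq_one
  ⟨_, isFejerKernel_norm_sq_fourier hη h1⟩

end Kernel

section LaplaceTransform

variable {B φ : ℝ → ℂ} {C : ℝ} {G : ℂ → ℂ}

/-- The Laplace transform `z ↦ ∫₀^∞ e^{-zu} f(u) du` of a function on the real line, of which only
the values on the half-line `u > 0` matter. -/
noncomputable def laplaceTransform (f : ℝ → ℂ) (z : ℂ) : ℂ :=
  ∫ u in Set.Ioi (0 : ℝ), Complex.exp (-z * u) * f u

lemma integrableOn_cexp_neg_mul {z : ℂ} (hz : 0 < z.re) :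
    IntegrableOn (fun u : ℝ => Complex.exp (-z * u)) (Set.Ioi 0) :=
  integrableOn_exp_mul_complex_Ioi (by simpa using hz) 0

lemma laplaceTransform_const (c : ℂ) {z : ℂ} (hz : 0 < z.re) :
    laplaceTransform (fun _ => c) z = c / z := by
  rw [laplaceTransform, integral_mul_const, integral_exp_mul_complex_Ioi (by simpa using hz)]
  simp [div_eq_inv_mul]

lemma integrableOn_cexp_neg_mul_mul (hB : Measurable B) (hC : ∀ u, ‖B u‖ ≤ C) {z : ℂ}
    (hz : 0 < z.re) : IntegrableOn (fun u : ℝ => Complex.exp (-z * u) * B u) (Set.Ioi 0) :=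
  (integrableOn_cexp_neg_mul hz).mul_bdd hB.aestronglyMeasurable (.of_forall hC)

lemma laplaceTransform_sub_const (hB : Measurable B) (hC : ∀ u, ‖B u‖ ≤ C) (c : ℂ) {z : ℂ}
    (hz : 0 < z.re) : laplaceTransform (fun u => B u - c) z = laplaceTransform B z - c / z := by
  rw [← laplaceTransform_const c hz]
  simp only [laplaceTransform, mul_sub]
  exact integral_sub (integrableOn_cexp_neg_mul_mul hB hC hz)
    ((integrableOn_cexp_neg_mul hz).mul_const c)

lemma integral_laplaceTransform_mul (hB : Measurable B) (hC : ∀ u, ‖B u‖ ≤ C)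
    (hφ : Integrable φ) {δ : ℝ} (hδ : 0 < δ) :
    ∫ ξ : ℝ, laplaceTransform B (δ + 2 * Real.pi * ξ * Complex.I) * φ ξ =
      ∫ u : ℝ in Set.Ioi 0, Complex.exp (-δ * u) * (B u * 𝓕 φ u) := by
  have h := VectorFourier.integral_fourierIntegral_smul_eq_flip (L := innerₗ ℝ) (ν := volume)
    Real.continuous_fourierChar continuous_inner
    (integrableOn_cexp_neg_mul_mul hB hC (z := δ) (by simpa using hδ)) hφ
  rw [flip_innerₗ] at h
  convert h using 1
  · refine integral_congr_ae (.of_forall fun ξ => ?_)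
    dsimp only
    rw [smul_eq_mul, laplaceTransform, VectorFourier.fourierIntegral]
    congr 1
    refine integral_congr_ae (.of_forall fun u => ?_)
    dsimp only
    rw [Circle.smul_def, Real.fourierChar_apply, smul_eq_mul, ← mul_assoc, ← Complex.exp_add]
    congr 2
    simp
    ring
  · exact integral_congr_ae (.of_forall fun u => (mul_assoc _ _ _).symm)

lemma tendsto_setIntegral_exp_neg_mul {f : ℝ → ℂ} (hf : IntegrableOn f (Set.Ioi 0)) :
    Tendsto (fun δ : ℝ => ∫ u : ℝ in Set.Ioi 0, Complex.exp (-δ * u) * f u) (𝓝[>] 0)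
      (𝓝 (∫ u in Set.Ioi 0, f u)) := by
  refine tendsto_integral_filter_of_dominated_convergence (fun u => ‖f u‖)
    (.of_forall fun δ => (by fun_prop : Continuous _).aestronglyMeasurable.mul
      hf.aestronglyMeasurable) ?_ hf.norm (.of_forall fun u => ?_)
  · filter_upwards [self_mem_nhdsWithin] with δ hδ
    filter_upwards [self_mem_ae_restrict measurableSet_Ioi] with u hu
    rw [norm_mul, Complex.norm_exp]
    refine mul_le_of_le_one_left (norm_nonneg _) (Real.exp_le_one_iff.2 ?_)
    simpa using (mul_pos hδ hu).le
  · have : Continuous fun δ : ℝ => Complex.exp (-δ * u) * f u := by fun_prop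
    simpa using (this.tendsto 0).mono_left nhdsWithin_le_nhds

lemma tendsto_integral_verticalLine_mul (hG : ContinuousOn G {z | 0 ≤ z.re})
    (hφ : Continuous φ) (hφs : HasCompactSupport φ) :
    Tendsto (fun δ : ℝ => ∫ ξ : ℝ, G (δ + 2 * Real.pi * ξ * Complex.I) * φ ξ) (𝓝[>] 0)
      (𝓝 (∫ ξ : ℝ, G (2 * Real.pi * ξ * Complex.I) * φ ξ)) := by
  have hcont : ContinuousOn (fun δ : ℝ => ∫ ξ : ℝ, G (δ + 2 * Real.pi * ξ * Complex.I) * φ ξ)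
      (Set.Ici 0) := by
    refine continuousOn_integral_of_compact_support hφs ?_ fun δ ξ _ hξ => ?_
    · refine (hG.comp (by fun_prop) fun p hp => ?_).mul (by fun_prop)
      simpa using hp.1
    · rw [image_eq_zero_of_notMem_tsupport hξ, mul_zero]
  simpa using (hcont 0 Set.self_mem_Ici).tendsto.mono_left
    (nhdsWithin_mono _ Set.Ioi_subset_Ici_self)

lemma setIntegral_mul_fourier_eq (hB : Measurable B) (hC : ∀ u, ‖B u‖ ≤ C)
    (hG : ContinuousOn G {z | 0 ≤ z.re}) (hBG : ∀ z, 0 < z.re → laplaceTransform B z = G z)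
    (hφ : Continuous φ) (hφs : HasCompactSupport φ) (hφi : Integrable (𝓕 φ)) :
    ∫ u in Set.Ioi 0, B u * 𝓕 φ u = ∫ ξ : ℝ, G (2 * Real.pi * ξ * Complex.I) * φ ξ := by
  have hint : IntegrableOn (fun u => B u * 𝓕 φ u) (Set.Ioi 0) :=
    (hφi.bdd_mul hB.aestronglyMeasurable (.of_forall hC)).integrableOn
  refine tendsto_nhds_unique (tendsto_setIntegral_exp_neg_mul hint)
    ((tendsto_integral_verticalLine_mul hG hφ hφs).congr' ?_)
  filter_upwards [self_mem_nhdsWithin] with δ hδ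
  rw [← integral_laplaceTransform_mul hB hC (hφ.integrable_of_hasCompactSupport hφs) hδ]
  refine integral_congr_ae (.of_forall fun ξ => ?_)
  dsimp only
  rw [hBG _ (by simpa using hδ)]

lemma tendsto_setIntegral_mul_fourier_sub (hB : Measurable B) (hC : ∀ u, ‖B u‖ ≤ C)
    (hG : ContinuousOn G {z | 0 ≤ z.re}) (hBG : ∀ z, 0 < z.re → laplaceTransform B z = G z)
    (hφ : Continuous φ) (hφs : HasCompactSupport φ) (hφi : Integrable (𝓕 φ)) :
    Tendsto (fun y => ∫ u in Set.Ioi 0, B u * 𝓕 φ (u - y)) atTop (𝓝 0) := by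
  have hshift (y : ℝ) : ∫ u in Set.Ioi 0, B u * 𝓕 φ (u - y) =
      𝓕 (fun ξ : ℝ => G (2 * Real.pi * ξ * Complex.I) * φ ξ) (-y) := by
    have hmod : 𝓕 (fun ξ => 𝐞 ⟪ξ, y⟫ • φ ξ) = fun u => 𝓕 φ (u - y) :=
      funext (fourier_fourierChar_smul φ y)
    have h := setIntegral_mul_fourier_eq hB hC hG hBG (φ := fun ξ => 𝐞 ⟪ξ, y⟫ • φ ξ)
      (by fun_prop) (hφs.smul_left (f := fun ξ => 𝐞 ⟪ξ, y⟫)) (hmod ▸ hφi.comp_sub_right y)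
    rw [hmod] at h
    rw [h, Real.fourier_eq]
    simp only [inner_neg_right, neg_neg, mul_smul_comm]
  simp only [hshift]
  exact (Real.zero_at_infty_fourier _).comp
    (tendsto_neg_atTop_atBot.mono_right atBot_le_cocompact)

lemma tendsto_setIntegral_Iic_mul_comp_sub (hB : Measurable B) (hC : ∀ u, ‖B u‖ ≤ C) {f : ℝ → ℂ}
    (hf : Integrable f) : Tendsto (fun y => ∫ u in Set.Iic 0, B u * f (u - y)) atTop (𝓝 0) := by
  have hshift (y : ℝ) : ∫ u in Set.Iic 0, B u * f (u - y) =
      ∫ v, (Set.Iic 0).indicator B (v + y) * f v := by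
    rw [← integral_indicator measurableSet_Iic, ← integral_add_right_eq_self _ y]
    simp only [Set.indicator_mul_left, add_sub_cancel_right]
  simp only [hshift]
  have hlim : Tendsto (fun y => ∫ v, (Set.Iic 0).indicator B (v + y) * f v) atTop
      (𝓝 (∫ _ : ℝ, 0)) := by
    refine tendsto_integral_filter_of_dominated_convergence (fun v => C * ‖f v‖)
      (.of_forall fun y => ((hB.indicator measurableSet_Iic).comp
        (measurable_add_const y)).aestronglyMeasurable.mul hf.aestronglyMeasurable)
      (.of_forall fun y => .of_forall fun v => ?_) (hf.norm.const_mul C) (.of_forall fun v => ?_)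
    · rw [norm_mul]
      gcongr
      exact (norm_indicator_le_norm_self _ _).trans (hC _)
    · refine tendsto_const_nhds.congr' ?_
      filter_upwards [eventually_gt_atTop (-v)] with y hy
      rw [Set.indicator_of_notMem (by rw [Set.mem_Iic]; linarith), zero_mul]
  simpa using hlim

lemma tendsto_integral_mul_fourier_sub (hB : Measurable B) (hC : ∀ u, ‖B u‖ ≤ C)
    (hG : ContinuousOn G {z | 0 ≤ z.re}) (hBG : ∀ z, 0 < z.re → laplaceTransform B z = G z)
    (hφ : Continuous φ) (hφs : HasCompactSupport φ) (hφi : Integrable (𝓕 φ)) :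
    Tendsto (fun y => ∫ u, B u * 𝓕 φ (u - y)) atTop (𝓝 0) := by
  have hint (y : ℝ) : Integrable fun u => B u * 𝓕 φ (u - y) :=
    (hφi.comp_sub_right y).bdd_mul hB.aestronglyMeasurable (.of_forall hC)
  have hsum := (tendsto_setIntegral_Iic_mul_comp_sub hB hC hφi).add
    (tendsto_setIntegral_mul_fourier_sub hB hC hG hBG hφ hφs hφi)
  rw [add_zero] at hsum
  refine hsum.congr fun y => ?_
  rw [← Set.compl_Iic, integral_add_compl measurableSet_Iic (hint y)]

lemma ofReal_integral_add_mul_sub_eq {S K : ℝ → ℝ} {c C : ℝ} (hS : Measurable S)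
    (hC : ∀ u, |S u| ≤ C) (hK : Integrable K) (hK1 : ∫ v, K v = 1) (y : ℝ) :
    ((∫ v, S (y + v) * K v : ℝ) : ℂ) - c = ∫ u, ((S u : ℂ) - c) * K (u - y) := by
  have hint : Integrable fun v => S (y + v) * K v :=
    hK.bdd_mul (hS.comp (measurable_const_add y)).aestronglyMeasurable (.of_forall fun v => hC _)
  calc ((∫ v, S (y + v) * K v : ℝ) : ℂ) - c
      = ((∫ v, (S (y + v) * K v - c * K v) : ℝ) : ℂ) := by
        rw [integral_sub hint (hK.const_mul c), integral_const_mul, hK1, mul_one,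
          Complex.ofReal_sub]
    _ = ∫ v, ((S (v + y) : ℂ) - c) * K (v + y - y) := by
        rw [← integral_complex_ofReal]
        simp only [add_sub_cancel_right, add_comm y, sub_mul, Complex.ofReal_sub,
          Complex.ofReal_mul]
    _ = ∫ u, ((S u : ℂ) - c) * K (u - y) :=
        integral_add_right_eq_self (fun u => ((S u : ℂ) - c) * K (u - y)) y

lemma IsFejerKernel.tendsto_integral_add_mul {S K : ℝ → ℝ} {c : ℝ} (hK : IsFejerKernel K)
    (hS : Measurable S) (hC : ∀ u, |S u| ≤ C) (hG : ContinuousOn G {z | 0 ≤ z.re})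
    (hSG : ∀ z, 0 < z.re → laplaceTransform (fun u => S u) z = c / z + G z) :
    Tendsto (fun y => ∫ v, S (y + v) * K v) atTop (𝓝 c) := by
  obtain ⟨φ, hφ, hφs, hφK⟩ := hK.exists_fourier_eq
  have hφi : Integrable (𝓕 φ) := hK.integrable.ofReal.congr (.of_forall fun u => (hφK u).symm)
  have hSm : Measurable fun u => (S u : ℂ) := by fun_prop
  have hSC (u : ℝ) : ‖(S u : ℂ)‖ ≤ C := by simpa using hC u
  have hlim := tendsto_integral_mul_fourier_sub (hSm.sub_const (c : ℂ))
    (fun u => (norm_sub_le _ _).trans (add_le_add_left (hSC u) _)) hG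
    (fun z hz => by rw [laplaceTransform_sub_const hSm hSC _ hz, hSG z hz, add_sub_cancel_left])
    hφ hφs hφi
  simp only [hφK, ← ofReal_integral_add_mul_sub_eq hS hC hK.integrable hK.integral_eq_one,
    tendsto_sub_nhds_zero_iff] at hlim
  exact tendsto_ofReal_iff.1 hlim

end LaplaceTransform

section Tauberian

variable {S K : ℝ → ℝ} {c C h : ℝ}

lemma measurable_of_monotone_mul_exp (hS : Monotone fun u => S u * Real.exp u) : Measurable S := by
  have hmul : Measurable fun u => S u * Real.exp u * Real.exp (-u) :=
    hS.measurable.mul (by fun_prop)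
  simpa only [mul_assoc, ← Real.exp_add, add_neg_cancel, Real.exp_zero, mul_one] using hmul

lemma le_mul_exp_sub_of_monotone_mul_exp (hS : Monotone fun u => S u * Real.exp u) {u v : ℝ}
    (huv : u ≤ v) : S u ≤ S v * Real.exp (v - u) := by
  rw [Real.exp_sub, mul_div_assoc', le_div_iff₀ (Real.exp_pos u)]
  exact hS huv

lemma tendsto_setIntegral_Icc_comp_mul_left (hK : Integrable K) (hh : 0 < h) :
    Tendsto (fun l : ℝ => ∫ v in Set.Icc (-h) h, l * K (l * v)) atTop (𝓝 (∫ v, K v)) := by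
  have hlim : Tendsto (fun l : ℝ => ∫ v in -(l * h)..l * h, K v) atTop (𝓝 (∫ v, K v)) :=
    intervalIntegral_tendsto_integral hK
      (tendsto_neg_atTop_atBot.comp (tendsto_id.atTop_mul_const hh))
      (tendsto_id.atTop_mul_const hh)
  refine hlim.congr fun l => ?_
  rw [integral_Icc_eq_integral_Ioc, ← intervalIntegral.integral_of_le (by linarith),
    intervalIntegral.integral_const_mul, intervalIntegral.mul_integral_comp_mul_left, mul_neg]

section Sandwich

variable (hS0 : ∀ u, 0 ≤ S u) (hSC : ∀ u, S u ≤ C) (hS : Monotone fun u => S u * Real.exp u)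

include hS0 hSC hS

lemma integrable_add_mul (hK : Integrable K) (y : ℝ) :
    Integrable fun v => S (y + v) * K v :=
  hK.bdd_mul
    ((measurable_of_monotone_mul_exp hS).comp (measurable_const_add y)).aestronglyMeasurable
    (.of_forall fun _ => (Real.norm_of_nonneg (hS0 _)).trans_le (hSC _))

lemma mul_setIntegral_le_integral_add_mul (hK0 : ∀ u, 0 ≤ K u) (hK : Integrable K) (y : ℝ) :
    S (y - h) * Real.exp (-(2 * h)) * ∫ v in Set.Icc (-h) h, K v ≤ ∫ v, S (y + v) * K v := by
  have hint := integrable_add_mul hS0 hSC hS hK y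
  rw [← integral_const_mul]
  refine (setIntegral_mono_on (hK.const_mul _).integrableOn hint.integrableOn measurableSet_Icc
    fun v hv => ?_).trans (setIntegral_le_integral hint
      (.of_forall fun v => mul_nonneg (hS0 _) (hK0 _)))
  refine mul_le_mul_of_nonneg_right ?_ (hK0 v)
  rw [Real.exp_neg, ← div_eq_mul_inv, div_le_iff₀ (Real.exp_pos _)]
  refine (le_mul_exp_sub_of_monotone_mul_exp hS (by linarith [hv.1] : y - h ≤ y + v)).trans ?_
  gcongr
  · exact hS0 _
  · linarith [hv.2]

lemma integral_add_mul_le (hK0 : ∀ u, 0 ≤ K u) (hK : Integrable K) (y : ℝ) :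
    ∫ v, S (y + v) * K v ≤ S (y + h) * Real.exp (2 * h) * (∫ v in Set.Icc (-h) h, K v) +
      C * ((∫ v, K v) - ∫ v in Set.Icc (-h) h, K v) := by
  have hint := integrable_add_mul hS0 hSC hS hK y
  rw [← setIntegral_compl measurableSet_Icc hK, ← integral_add_compl measurableSet_Icc hint,
    ← integral_const_mul, ← integral_const_mul]
  refine add_le_add (setIntegral_mono_on hint.integrableOn (hK.const_mul _).integrableOn
    measurableSet_Icc fun v hv => mul_le_mul_of_nonneg_right ?_ (hK0 v))
    (setIntegral_mono_on hint.integrableOn (hK.const_mul _).integrableOn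
    measurableSet_Icc.compl fun v _ => mul_le_mul_of_nonneg_right (hSC _) (hK0 v))
  refine (le_mul_exp_sub_of_monotone_mul_exp hS (by linarith [hv.2] : y + v ≤ y + h)).trans ?_
  gcongr
  · exact hS0 _
  · linarith [hv.1]

variable (hK : IsFejerKernel K)
  (hlim : ∀ l > 0, Tendsto (fun y => ∫ v, S (y + v) * (l * K (l * v))) atTop (𝓝 c))

include hK hlim

lemma eventually_lt_of_tendsto_integral_add_mul {a : ℝ} (ha : c < a) :
    ∀ᶠ u in atTop, S u < a := by
  have hh : ∀ᶠ h in 𝓝[>] (0 : ℝ), c < a * Real.exp (-(2 * h)) := by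
    have : Continuous fun h : ℝ => a * Real.exp (-(2 * h)) := by fun_prop
    exact ((this.tendsto' 0 a (by simp)).mono_left nhdsWithin_le_nhds).eventually_const_lt ha
  -- First `h` is taken small, then `l` large, so that `[-h, h]` carries almost all of the mass.
  obtain ⟨h, hch, hh0⟩ := (hh.and self_mem_nhdsWithin).exists
  have hmass := tendsto_setIntegral_Icc_comp_mul_left hK.integrable (h := h) hh0
  rw [hK.integral_eq_one] at hmass
  have hbound := (hmass.const_mul (a * Real.exp (-(2 * h)))).eventually_const_lt
    (by simpa using hch)
  obtain ⟨l, ⟨hcl, hml⟩, hl⟩ := ((hbound.and (hmass.eventually_const_lt one_pos)).and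
    (eventually_gt_atTop 0)).exists
  have hKl := hK.rescale hl
  filter_upwards [(tendsto_atTop_add_const_right atTop h tendsto_id).eventually
    ((hlim l hl).eventually_lt_const hcl)] with u hu
  have hlow := mul_setIntegral_le_integral_add_mul (h := h) hS0 hSC hS hKl.nonneg hKl.integrable
    (u + h)
  rw [add_sub_cancel_right] at hlow
  have := hlow.trans_lt hu
  exact (lt_of_mul_lt_mul_right (lt_of_mul_lt_mul_right this hml.le) (Real.exp_pos _).le)

lemma eventually_gt_of_tendsto_integral_add_mul {a : ℝ} (ha : a < c) :
    ∀ᶠ u in atTop, a < S u := by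
  have hh : ∀ᶠ h in 𝓝[>] (0 : ℝ), a * Real.exp (2 * h) < c := by
    have : Continuous fun h : ℝ => a * Real.exp (2 * h) := by fun_prop
    exact ((this.tendsto' 0 a (by simp)).mono_left nhdsWithin_le_nhds).eventually_lt_const ha
  obtain ⟨h, hch, hh0⟩ := (hh.and self_mem_nhdsWithin).exists
  have hmass := tendsto_setIntegral_Icc_comp_mul_left hK.integrable (h := h) hh0
  rw [hK.integral_eq_one] at hmass
  have hbound : Tendsto (fun l => a * Real.exp (2 * h) * (∫ v in Set.Icc (-h) h, l * K (l * v)) +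
      C * (1 - ∫ v in Set.Icc (-h) h, l * K (l * v))) atTop (𝓝 (a * Real.exp (2 * h))) := by
    simpa using (hmass.const_mul (a * Real.exp (2 * h))).add ((hmass.const_sub 1).const_mul C)
  obtain ⟨l, ⟨hcl, hml⟩, hl⟩ := (((hbound.eventually_lt_const hch).and
    (hmass.eventually_const_lt one_pos)).and (eventually_gt_atTop 0)).exists
  have hKl := hK.rescale hl
  filter_upwards [(tendsto_atTop_add_const_right atTop (-h) tendsto_id).eventually
    ((hlim l hl).eventually_const_lt hcl)] with u hu
  have hup := integral_add_mul_le (h := h) hS0 hSC hS hKl.nonneg hKl.integrable (u + -h)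
  rw [hKl.integral_eq_one, neg_add_cancel_right] at hup
  have := lt_of_add_lt_add_right (hu.trans_le hup)
  exact (lt_of_mul_lt_mul_right (lt_of_mul_lt_mul_right this hml.le) (Real.exp_pos _).le)

end Sandwich

theorem tendsto_of_laplaceTransform_eq {G : ℂ → ℂ} (hS0 : ∀ u, 0 ≤ S u) (hSC : ∀ u, S u ≤ C)
    (hS : Monotone fun u => S u * Real.exp u) (hG : ContinuousOn G {z | 0 ≤ z.re})
    (hSG : ∀ z, 0 < z.re → laplaceTransform (fun u => S u) z = c / z + G z) :
    Tendsto S atTop (𝓝 c) := by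
  obtain ⟨K, hK⟩ := exists_isFejerKernel
  have hlim (l : ℝ) (hl : 0 < l) :
      Tendsto (fun y => ∫ v, S (y + v) * (l * K (l * v))) atTop (𝓝 c) :=
    (hK.rescale hl).tendsto_integral_add_mul (measurable_of_monotone_mul_exp hS)
      (fun u => (abs_of_nonneg (hS0 u)).trans_le (hSC u)) hG hSG
  exact tendsto_order.2
    ⟨fun _ => eventually_gt_of_tendsto_integral_add_mul hS0 hSC hS hK hlim,
      fun _ => eventually_lt_of_tendsto_integral_add_mul hS0 hSC hS hK hlim⟩

end Tauberian

section WienerIkehara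

variable {f : ℕ → ℝ} {c C : ℝ}

/-- The mean value `e^{-u} ∑_{1 ≤ n ≤ e^u} f n` of an arithmetic function on the logarithmic scale,
on which its Dirichlet series becomes a Laplace transform. -/
noncomputable def logMean (f : ℕ → ℝ) (u : ℝ) : ℝ :=
  (∑ n ∈ Finset.Icc 1 ⌊Real.exp u⌋₊, f n) * Real.exp (-u)

lemma logMean_mul_exp (f : ℕ → ℝ) (u : ℝ) :
    logMean f u * Real.exp u = ∑ n ∈ Finset.Icc 1 ⌊Real.exp u⌋₊, f n := by
  rw [logMean, mul_assoc, ← Real.exp_add, neg_add_cancel, Real.exp_zero, mul_one]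

lemma logMean_log (f : ℕ → ℝ) {x : ℝ} (hx : 0 < x) :
    logMean f (Real.log x) = (∑ n ∈ Finset.Icc 1 ⌊x⌋₊, f n) / x := by
  rw [logMean, Real.exp_neg, Real.exp_log hx, div_eq_mul_inv]

lemma logMean_nonneg (hf : ∀ n, 0 ≤ f n) (u : ℝ) : 0 ≤ logMean f u :=
  mul_nonneg (Finset.sum_nonneg fun n _ => hf n) (Real.exp_pos _).le

lemma logMean_le (hC0 : 0 ≤ C) (hC : ∀ n : ℕ, ∑ k ∈ Finset.Icc 1 n, f k ≤ C * n) (u : ℝ) :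
    logMean f u ≤ C := by
  rw [← mul_le_mul_iff_left₀ (Real.exp_pos u), logMean_mul_exp]
  exact (hC _).trans (mul_le_mul_of_nonneg_left (Nat.floor_le (Real.exp_pos u).le) hC0)

lemma monotone_logMean_mul_exp (hf : ∀ n, 0 ≤ f n) :
    Monotone fun u => logMean f u * Real.exp u := by
  intro u v huv
  simp only [logMean_mul_exp]
  exact Finset.sum_le_sum_of_subset_of_nonneg
    (Finset.Icc_subset_Icc_right (Nat.floor_mono (Real.exp_le_exp.2 huv))) fun n _ _ => hf n

lemma LSeries_eq_mul_laplaceTransform_logMean (hf : ∀ n, 0 ≤ f n)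
    (hC : ∀ n : ℕ, ∑ k ∈ Finset.Icc 1 n, f k ≤ C * n) {s : ℂ} (hs : 1 < s.re) :
    LSeries (fun n => f n) s = s * laplaceTransform (fun u => logMean f u) (s - 1) := by
  have hO : (fun n => ∑ k ∈ Finset.Icc 1 n, f k) =O[atTop] fun n => (n : ℝ) ^ (1 : ℝ) := by
    refine Asymptotics.IsBigO.of_bound C (.of_forall fun n => ?_)
    rw [Real.rpow_one, Real.norm_natCast, Real.norm_of_nonneg (Finset.sum_nonneg fun k _ => hf k)]
    exact hC n
  rw [LSeries_eq_mul_integral_of_nonneg f zero_le_one hs hO hf, ← Real.exp_zero,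
    ← integral_comp_exp_Ioi, laplaceTransform]
  congr 1
  refine integral_congr_ae (.of_forall fun u => ?_)
  have hexp : ((Real.exp u : ℝ) : ℂ) * (Real.exp u : ℂ) ^ (-(s + 1)) =
      Complex.exp (-(s - 1) * u) * Complex.exp (-u) := by
    rw [Complex.cpow_def_of_ne_zero (by exact_mod_cast (Real.exp_pos u).ne'),
      ← Complex.ofReal_log (Real.exp_pos u).le, Real.log_exp, Complex.ofReal_exp,
      ← Complex.exp_add, ← Complex.exp_add]
    ring_nf
  dsimp only
  rw [Complex.real_smul, mul_left_comm, hexp, logMean]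
  push_cast
  ring

theorem tendsto_sum_div_of_LSeries_eq {F : ℂ → ℂ} (hf : ∀ n, 0 ≤ f n)
    (hC : ∀ n : ℕ, ∑ k ∈ Finset.Icc 1 n, f k ≤ C * n) (hF : ContinuousOn F {s | 1 ≤ s.re})
    (hfF : ∀ s, 1 < s.re → LSeries (fun n => f n) s = c / (s - 1) + F s) :
    Tendsto (fun x : ℝ => (∑ n ∈ Finset.Icc 1 ⌊x⌋₊, f n) / x) atTop (𝓝 c) := by
  have hC0 : 0 ≤ C := (hf 1).trans (by simpa using hC 1)
  have hne {z : ℂ} (hz : 0 ≤ z.re) : z + 1 ≠ 0 := fun h0 => by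
    have hre : z.re + 1 = 0 := by simpa using congrArg Complex.re h0
    linarith
  -- `(c / z + F (z + 1)) / (z + 1) = c / z + (F (z + 1) - c) / (z + 1)`
  have hG : ContinuousOn (fun z => (F (z + 1) - c) / (z + 1)) {z : ℂ | 0 ≤ z.re} := by
    refine ((hF.comp (by fun_prop) fun z hz => ?_).sub continuousOn_const).div (by fun_prop)
      fun z => hne
    simpa using hz
  have hlap (z : ℂ) (hz : 0 < z.re) :
      laplaceTransform (fun u => logMean f u) z = c / z + (F (z + 1) - c) / (z + 1) := by
    have hL := hfF (z + 1) (by simpa using hz)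
    rw [LSeries_eq_mul_laplaceTransform_logMean hf hC (by simpa using hz),
      add_sub_cancel_right] at hL
    have hz0 : z ≠ 0 := by
      rintro rfl
      simp at hz
    have hz1 : z + 1 ≠ 0 := hne hz.le
    rw [eq_div_of_mul_eq hz1 ((mul_comm _ _).trans hL)]
    field_simp
    ring
  have hlim := tendsto_of_laplaceTransform_eq (logMean_nonneg hf) (logMean_le hC0 hC)
    (monotone_logMean_mul_exp hf) hG hlap
  refine (hlim.comp Real.tendsto_log_atTop).congr' ?_
  filter_upwards [eventually_gt_atTop 0] with x hx using logMean_log f hx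

end WienerIkehara

section PrimeSums

open Chebyshev ArithmeticFunction

variable {A : Set ℕ} {c : ℝ}

/-- Chebyshev's function `ψ` restricted to a set `A` of natural numbers: the sum of `Λ n` over the
`n ≤ x` in `A`. -/
noncomputable def psiOn (A : Set ℕ) (x : ℝ) : ℝ :=
  ∑ n ∈ Finset.Ioc 0 ⌊x⌋₊, A.indicator (fun n => Λ n) n

/-- Chebyshev's function `θ` restricted to a set `A` of natural numbers: the sum of `log p` over the
primes `p ≤ x` in `A`. -/
noncomputable def thetaOn (A : Set ℕ) (x : ℝ) : ℝ :=
  ∑ p ∈ Nat.primesLE ⌊x⌋₊, A.indicator (fun p => Real.log p) p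

/-- The number of primes `p ≤ x` in a set `A` of natural numbers, as a real number. -/
noncomputable def primeCountingOn (A : Set ℕ) (x : ℝ) : ℝ :=
  ∑ p ∈ Nat.primesLE ⌊x⌋₊, A.indicator 1 p

lemma psiOn_sub_thetaOn (A : Set ℕ) (x : ℝ) :
    psiOn A x - thetaOn A x =
      ∑ n ∈ Finset.Ioc 0 ⌊x⌋₊ with ¬n.Prime, A.indicator (fun n => Λ n) n := by
  rw [sub_eq_iff_eq_add', psiOn, thetaOn, Nat.primesLE_eq_filter_Ioc_zero,
    ← Finset.sum_filter_add_sum_filter_not _ Nat.Prime]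
  congr 1
  refine Finset.sum_congr rfl fun p hp => ?_
  simp only [Set.indicator, vonMangoldt_apply_prime (Finset.mem_filter.1 hp).2]

lemma thetaOn_le_psiOn (A : Set ℕ) (x : ℝ) : thetaOn A x ≤ psiOn A x := by
  rw [← sub_nonneg, psiOn_sub_thetaOn]
  exact Finset.sum_nonneg fun n _ => Set.indicator_nonneg (fun n _ => vonMangoldt_nonneg) n

lemma psiOn_sub_thetaOn_le (A : Set ℕ) (x : ℝ) : psiOn A x - thetaOn A x ≤ ψ x - θ x := by
  rw [psiOn_sub_thetaOn, psi_sub_theta_eq_sum_not_prime]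
  exact Finset.sum_le_sum fun n _ => Set.indicator_le_self' (fun n _ => vonMangoldt_nonneg) n

lemma psi_sub_theta_isLittleO_id : (fun x => ψ x - θ x) =o[atTop] fun x => x := by
  refine isBigO_psi_sub_theta_sqrt.trans_isLittleO (Asymptotics.isLittleO_of_tendsto' ?_ ?_)
  · filter_upwards [eventually_ne_atTop 0] with x hx hx0 using absurd hx0 hx
  · simpa only [Real.sqrt_div_self] using! Real.tendsto_sqrt_atTop.inv_tendsto_atTop

lemma tendsto_thetaOn_div (h : Tendsto (fun x => psiOn A x / x) atTop (𝓝 c)) :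
    Tendsto (fun x => thetaOn A x / x) atTop (𝓝 c) := by
  have hO : (fun x => psiOn A x - thetaOn A x) =O[atTop] fun x => ψ x - θ x := by
    refine Asymptotics.IsBigO.of_norm_le fun x => ?_
    rw [Real.norm_of_nonneg (sub_nonneg.2 (thetaOn_le_psiOn A x))]
    exact psiOn_sub_thetaOn_le A x
  have hdiff := (hO.trans_isLittleO psi_sub_theta_isLittleO_id).tendsto_div_nhds_zero
  simpa [sub_div] using h.sub hdiff

lemma primeCountingOn_sub_thetaOn_div_log (A : Set ℕ) (x : ℝ) :
    primeCountingOn A x - thetaOn A x / Real.log x =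
      ∑ p ∈ Nat.primesLE ⌊x⌋₊,
        A.indicator (fun p => 1 - Real.log p / Real.log x) p := by
  rw [primeCountingOn, thetaOn, Finset.sum_div, ← Finset.sum_sub_distrib]
  refine Finset.sum_congr rfl fun p _ => ?_
  by_cases hp : p ∈ A <;> simp [hp]

lemma one_sub_log_div_log_nonneg {p : ℕ} {x : ℝ} (hp : p ∈ Nat.primesLE ⌊x⌋₊) :
    0 ≤ 1 - Real.log p / Real.log x := by
  have hp1 : (1 : ℝ) ≤ p := by exact_mod_cast (Nat.one_lt_of_mem_primesLE hp).le
  have hpx : (p : ℝ) ≤ x :=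
    (Nat.le_floor_iff' (Nat.prime_of_mem_primesLE hp).ne_zero).1 (Nat.le_of_mem_primesLE hp)
  exact sub_nonneg.2 (div_le_one_of_le₀ (Real.log_le_log (by linarith) hpx)
    (Real.log_nonneg (hp1.trans hpx)))

lemma thetaOn_div_log_le_primeCountingOn (A : Set ℕ) (x : ℝ) :
    thetaOn A x / Real.log x ≤ primeCountingOn A x := by
  rw [← sub_nonneg, primeCountingOn_sub_thetaOn_div_log]
  exact Finset.sum_nonneg fun p hp => Set.indicator_apply_nonneg fun _ =>
    one_sub_log_div_log_nonneg hp

lemma primeCountingOn_sub_le (A : Set ℕ) (x : ℝ) :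
    primeCountingOn A x - thetaOn A x / Real.log x ≤ Nat.primeCounting ⌊x⌋₊ - θ x / Real.log x := by
  have huniv : Nat.primeCounting ⌊x⌋₊ - θ x / Real.log x =
      ∑ p ∈ Nat.primesLE ⌊x⌋₊, (1 - Real.log p / Real.log x) := by
    simp [theta_eq_sum_primesLE, ← Nat.primesLE_card_eq_primeCounting, Finset.sum_div]
  rw [huniv, primeCountingOn_sub_thetaOn_div_log]
  exact Finset.sum_le_sum fun p hp => Set.indicator_apply_le' (fun _ => le_rfl) fun _ =>
    one_sub_log_div_log_nonneg hp

lemma isLittleO_div_log_of_isBigO_div_log_sq {f : ℝ → ℝ}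
    (hf : f =O[atTop] fun x => x / Real.log x ^ 2) : f =o[atTop] fun x => x / Real.log x := by
  have hlog : (fun x => (Real.log x)⁻¹) =o[atTop] fun _ => (1 : ℝ) :=
    (Asymptotics.isLittleO_one_iff ℝ).2 Real.tendsto_log_atTop.inv_tendsto_atTop
  refine hf.trans_isLittleO ?_
  simpa [pow_two, div_eq_mul_inv, mul_assoc] using
    (Asymptotics.isBigO_refl (fun x => x / Real.log x) atTop).mul_isLittleO hlog

lemma tendsto_primeCountingOn_div (h : Tendsto (fun x => psiOn A x / x) atTop (𝓝 c)) :
    Tendsto (fun x => primeCountingOn A x / (x / Real.log x)) atTop (𝓝 c) := by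
  have hO : (fun x => primeCountingOn A x - thetaOn A x / Real.log x) =O[atTop]
      fun x => Nat.primeCounting ⌊x⌋₊ - θ x / Real.log x := by
    refine Asymptotics.IsBigO.of_norm_le fun x => ?_
    rw [Real.norm_of_nonneg (sub_nonneg.2 (thetaOn_div_log_le_primeCountingOn A x))]
    exact primeCountingOn_sub_le A x
  have hdiff := (isLittleO_div_log_of_isBigO_div_log_sq
    (hO.trans primeCounting_sub_theta_div_log_isBigO)).tendsto_div_nhds_zero
  have hsum := (tendsto_thetaOn_div h).add hdiff
  rw [add_zero] at hsum
  refine hsum.congr' ?_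
  filter_upwards [eventually_gt_atTop 1] with x hx
  have hlog := Real.log_pos hx
  field_simp
  ring

end PrimeSums

section LogIntegral

lemma hasDerivAt_div_log {t : ℝ} (ht : 1 < t) :
    HasDerivAt (fun t => t / Real.log t) (1 / Real.log t - 1 / Real.log t ^ 2) t := by
  have hlog : Real.log t ≠ 0 := (Real.log_pos ht).ne'
  have ht0 : t ≠ 0 := by linarith
  refine ((hasDerivAt_id' t).fun_div (Real.hasDerivAt_log ht0) hlog).congr_deriv ?_
  field_simp

lemma integral_one_div_log_eq {a x : ℝ} (ha : 1 < a) (hx : 1 < x) :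
    ∫ t in a..x, 1 / Real.log t =
      x / Real.log x - a / Real.log a + ∫ t in a..x, 1 / Real.log t ^ 2 := by
  have hgt {t : ℝ} (ht : t ∈ Set.uIcc a x) : 1 < t := (lt_min ha hx).trans_le ht.1
  have hint : IntervalIntegrable (fun t => 1 / Real.log t) volume a x := by
    refine ContinuousOn.intervalIntegrable fun t ht => ContinuousAt.continuousWithinAt ?_
    exact continuousAt_const.div (Real.continuousAt_log (by linarith [hgt ht]))
      (Real.log_pos (hgt ht)).ne'
  have hint2 := Chebyshev.intervalIntegrable_one_div_log_sq ha hx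
  rw [← sub_eq_iff_eq_add, ← intervalIntegral.integral_sub hint hint2]
  exact intervalIntegral.integral_eq_sub_of_hasDerivAt (fun t ht => hasDerivAt_div_log (hgt ht))
    (hint.sub hint2)

lemma tendsto_integral_one_div_log_div :
    Tendsto (fun x : ℝ => (∫ t in (2 : ℝ)..x, 1 / Real.log t) / (x / Real.log x)) atTop (𝓝 1) := by
  have hconst : Tendsto (fun x : ℝ => 2 / Real.log 2 * (Real.log x / x)) atTop (𝓝 0) := by
    simpa using Real.isLittleO_log_id_atTop.tendsto_div_nhds_zero.const_mul (2 / Real.log 2)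
  have hsq := (isLittleO_div_log_of_isBigO_div_log_sq
    Chebyshev.integral_one_div_log_sq_isBigO).tendsto_div_nhds_zero
  have hsum := (hconst.const_sub 1).add hsq
  rw [sub_zero, add_zero] at hsum
  refine hsum.congr' ?_
  filter_upwards [eventually_gt_atTop 1] with x hx
  have hlog := Real.log_pos hx
  rw [integral_one_div_log_eq one_lt_two hx]
  field_simp

end LogIntegral

section ResidueClass

open ArithmeticFunction.vonMangoldt

lemma tendsto_psiOn_residueClass_div {q : ℕ} [NeZero q] {a : ZMod q} (ha : IsUnit a) :
    Tendsto (fun x => psiOn {n | (n : ZMod q) = a} x / x) atTop (𝓝 (q.totient : ℝ)⁻¹) := by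
  refine tendsto_sum_div_of_LSeries_eq (f := residueClass a) (C := Real.log 4 + 4)
    (residueClass_nonneg a) (fun n => ?_) (continuousOn_LFunctionResidueClassAux a) fun s hs => ?_
  · have hpsi := Chebyshev.psi_le_const_mul_self n.cast_nonneg
    rw [Chebyshev.psi, Nat.floor_natCast] at hpsi
    exact (Finset.sum_le_sum fun k _ => residueClass_le a k).trans hpsi
  · rw [eqOn_LFunctionResidueClassAux ha hs]
    push_cast
    ring

lemma primeCountingOn_residueClass (a b : ℕ) (x : ℝ) :
    primeCountingOn {n | (n : ZMod a) = b} x =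
      ((Finset.range (⌊x⌋₊ + 1)).filter fun p => p.Prime ∧ p % a = b % a).card := by
  rw [primeCountingOn, ← Finset.filter_filter, Finset.natCast_card_filter]
  refine Finset.sum_congr rfl fun p _ => ?_
  simp [Set.indicator_apply, ZMod.natCast_eq_natCast_iff']

end ResidueClass

/-- Prime number theorem for arithmetic progressions:  if `gcd a b = 1`, then the number
of primes `p ≤ x` with `p ≡ b (mod a)` is asymptotic to `Li(x)/φ(a)`. -/
theorem pnt_arithmetic_progressions (a b : ℕ) (ha : 0 < a) (hab : Nat.Coprime a b) :
    Tendsto (fun x : ℝ =>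
        (((Finset.range (⌊x⌋₊ + 1)).filter fun p => p.Prime ∧ p % a = b % a).card : ℝ) /
          ((1 / (Nat.totient a : ℝ)) * ∫ t in (2:ℝ)..x, 1 / Real.log t))
      atTop (nhds 1) := by
  have : NeZero a := ⟨ha.ne'⟩
  have hφ : (a.totient : ℝ)⁻¹ ≠ 0 := by simpa using ha.ne'
  have hb : IsUnit (b : ZMod a) := (ZMod.isUnit_iff_coprime b a).2 hab.symm
  have hπ := tendsto_primeCountingOn_div (tendsto_psiOn_residueClass_div hb)
  have hLi := tendsto_integral_one_div_log_div.const_mul (a.totient : ℝ)⁻¹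
  rw [mul_one] at hLi
  have hratio := hπ.div hLi hφ
  rw [div_self hφ] at hratio
  refine hratio.congr' ?_
  filter_upwards [eventually_gt_atTop 1] with x hx
  have hx0 : x / Real.log x ≠ 0 := (div_pos (by linarith) (Real.log_pos hx)).ne'
  rw [Pi.div_apply, primeCountingOn_residueClass, ← mul_div_assoc, div_div_div_cancel_right₀ hx0,
    one_div]
end

section
/- Let g ∈ ℤ[x] be a monic irreducible polynomial, and for each prime p let ω(p) denote the number of solutions in ℤ/pℤ of the congruence g(x) ≡ 0 (mod p). Then the sum ∑_p (ω(p) − 1)/p, taken over all primes p, converges; that is, the partial sums ∑_{p ≤ N} (ω(p) − 1)/p tend to a finite limit as N → ∞. -/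
open Filter

open scoped Topology

/-!
Let `K = ℚ[x]/(g)` and let `a n` be the number of ideals of norm `n` in its ring of integers. By
Dedekind–Kummer, `ω(p) = a p` for all but finitely many primes `p`. The Dedekind zeta function of
`K` and the Riemann zeta function both have a simple pole at `1`, so comparing the logarithms of
their Euler products shows that `∑_p (a p - 1) p ^ (-1 - s)` has a limit as `s → 0⁺`. To pass from
this limit to the convergence at `s = 0` one needs a Tauberian argument: the terms are bounded by
`C Λ(n) / (n log n)`, and since `∑_n Λ(n) n ^ (-1 - s) ∼ 1 / s`, Karamata's method of approximating
a step function by polynomials in `exp (-s log n)` applies.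
-/

section PolynomialApproximation

lemma integral_inv_one_add_sq_mul_sub_le (a b c : ℝ) {n : ℝ} (hn : 0 < n) :
    ∫ x in a..b, (1 + (n * x - c) ^ 2)⁻¹ ≤ Real.pi / n := by
  rw [intervalIntegral.integral_comp_mul_sub (fun u : ℝ => (1 + u ^ 2)⁻¹) hn.ne',
    integral_inv_one_add_sq, smul_eq_mul, inv_mul_eq_div]
  have := Real.arctan_lt_pi_div_two (n * b - c)
  have := Real.neg_pi_div_two_lt_arctan (n * a - c)
  gcongr
  linarith

lemma exists_continuous_near_step (a b c : ℝ) {ε : ℝ} (hε : 0 < ε) :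
    ∃ f e : ℝ → ℝ, Continuous f ∧ Continuous e ∧
      (∀ x, |(if c ≤ x then 1 else 0) - f x| ≤ e x) ∧ ∫ x in a..b, e x < ε := by
  obtain ⟨n, hn⟩ := exists_gt (Real.pi / ε)
  have hn0 : 0 < n := (div_pos Real.pi_pos hε).trans hn
  refine ⟨fun x => 1 - (1 + max (n * x - n * c) 0 ^ 2)⁻¹, fun x => (1 + (n * x - n * c) ^ 2)⁻¹,
    ?_, ?_, fun x => ?_, (integral_inv_one_add_sq_mul_sub_le a b _ hn0).trans_lt ?_⟩
  · fun_prop (disch := intro x; positivity)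
  · fun_prop (disch := intro x; positivity)
  · beta_reduce
    have hpos : 0 ≤ (1 + (n * x - n * c) ^ 2)⁻¹ := by positivity
    split_ifs with hx
    · have : 0 ≤ n * x - n * c := by rw [← mul_sub]; exact mul_nonneg hn0.le (sub_nonneg.2 hx)
      rw [max_eq_left this, sub_sub_cancel, abs_of_nonneg hpos]
    · have : n * x - n * c ≤ 0 := by
        rw [← mul_sub]; exact mul_nonpos_of_nonneg_of_nonpos hn0.le (by linarith)
      simpa [max_eq_right this] using hpos
  · rwa [div_lt_comm₀ hn0 hε]

open Polynomial in
lemma exists_polynomial_near_of_near_continuous {a b ε : ℝ} (hab : a ≤ b) {h f e : ℝ → ℝ}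
    (hf : Continuous f) (he : Continuous e) (hfe : ∀ x ∈ Set.Icc a b, |h x - f x| ≤ e x)
    (hε : ∫ x in a..b, e x < ε) :
    ∃ P R : ℝ[X], (∀ x ∈ Set.Icc a b, |h x - P.eval x| ≤ R.eval x) ∧
      ∫ x in a..b, R.eval x < ε := by
  obtain ⟨δ, hδ, hδε⟩ := exists_pos_mul_lt (sub_pos.2 hε) (3 * (b - a))
  obtain ⟨P, hP⟩ := exists_polynomial_near_of_continuousOn a b f hf.continuousOn δ hδ
  obtain ⟨Q, hQ⟩ := exists_polynomial_near_of_continuousOn a b e he.continuousOn δ hδ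
  refine ⟨P, Q + C (2 * δ), fun x hx => ?_, ?_⟩
  · have hPx := (abs_sub_comm _ _).trans_lt (hP x hx)
    have hQx := abs_lt.1 (hQ x hx)
    have htri := abs_sub_le (h x) (f x) (P.eval x)
    have hfex := hfe x hx
    rw [eval_add, eval_C]
    linarith
  · have hle : ∫ x in a..b, (Q + C (2 * δ)).eval x ≤ ∫ x in a..b, (e x + 3 * δ) := by
      refine intervalIntegral.integral_mono_on hab
        ((Polynomial.continuous _).intervalIntegrable _ _)
        ((he.add continuous_const).intervalIntegrable _ _) fun x hx => ?_
      have hQx := abs_lt.1 (hQ x hx)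
      rw [eval_add, eval_C]
      linarith
    rw [intervalIntegral.integral_add (he.intervalIntegrable _ _) intervalIntegrable_const,
      intervalIntegral.integral_const, smul_eq_mul] at hle
    linarith

open Polynomial in
lemma exists_polynomial_near_step {ε : ℝ} (hε : 0 < ε) :
    ∃ P R : ℝ[X], (∀ x ∈ Set.Icc (0 : ℝ) 1,
        |(if 1 / 2 ≤ x then 1 else 0) - (x + x * (1 - x) * P.eval x)| ≤ x * (1 - x) * R.eval x) ∧
      (∀ x ∈ Set.Icc (0 : ℝ) 1, 0 ≤ R.eval x) ∧ ∫ x in (0 : ℝ)..1, R.eval x < ε := by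
  obtain ⟨f, e, hf, he, hfe, hintegral⟩ := exists_continuous_near_step 0 1 (1 / 2)
    (by positivity : 0 < ε / 4)
  have hmax (x : ℝ) : 1 / 2 ≤ max x (1 - x) := by
    rcases le_total (1 / 2) x with hx | hx
    · exact le_max_of_le_left hx
    · exact le_max_of_le_right (by linarith)
  -- The quotient of `1_{x ≥ 1/2} - x` by `x (1 - x)` is `± 1 / max x (1 - x)`, which is bounded.
  have hnear (x : ℝ) : |(max x (1 - x))⁻¹ * (2 * (if 1 / 2 ≤ x then 1 else 0) - 1) -
      (max x (1 - x))⁻¹ * (2 * f x - 1)| ≤ 4 * e x := by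
    have hinv : (max x (1 - x))⁻¹ ≤ 2 := inv_le_of_inv_le₀ two_pos (by simpa using hmax x)
    rw [← mul_sub, sub_sub_sub_cancel_right, ← mul_sub, abs_mul, abs_mul, abs_two,
      abs_of_nonneg (inv_nonneg.2 (one_half_pos.le.trans (hmax x)))]
    calc _ ≤ 2 * (2 * e x) := by gcongr; exact hfe x
      _ = 4 * e x := by ring
  obtain ⟨P, R, hPR, hR⟩ := exists_polynomial_near_of_near_continuous (ε := ε)
    zero_le_one (by fun_prop (disch := intro x; linarith [hmax x])) (he.const_mul 4)
    (fun x _ => hnear x) (by rw [intervalIntegral.integral_const_mul]; linarith)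
  refine ⟨P, R, fun x hx => ?_, fun x hx => (abs_nonneg _).trans (hPR x hx), hR⟩
  have hx0 : 0 ≤ x * (1 - x) := mul_nonneg hx.1 (sub_nonneg.2 hx.2)
  have hquot : (if 1 / 2 ≤ x then (1 : ℝ) else 0) - x =
      x * (1 - x) * ((max x (1 - x))⁻¹ * (2 * (if 1 / 2 ≤ x then 1 else 0) - 1)) := by
    split_ifs with h
    · rw [max_eq_left (by linarith)]
      field_simp
      ring
    · rw [max_eq_right (by linarith)]
      have : 1 - x ≠ 0 := by linarith
      field_simp
      ring
  rw [← sub_sub, hquot, ← mul_sub, abs_mul, abs_of_nonneg hx0]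
  exact mul_le_mul_of_nonneg_left (hPR x hx) hx0

end PolynomialApproximation

section Tauberian

open Polynomial in
lemma hasSum_mul_eval {ι R : Type*} [CommSemiring R] [TopologicalSpace R] [IsTopologicalSemiring R]
    {a x : ι → R} {m : ℕ → R} (h : ∀ k, HasSum (fun i => a i * x i ^ k) (m k)) (P : R[X]) :
    HasSum (fun i => a i * P.eval (x i)) (P.sum fun k r => r * m k) := by
  simp_rw [eval_eq_sum, Polynomial.sum, Finset.mul_sum, mul_left_comm (a _)]
  exact hasSum_sum fun k _ => (h k).mul_left (P.coeff k)

variable {ι : Type*} {b w ℓ : ι → ℝ}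

open Polynomial in
lemma hasSum_mul_exp_mul_eval (hb : ∀ s > 0, Summable fun i => b i * Real.exp (-(ℓ i * s)))
    (P : ℝ[X]) {s : ℝ} (hs : 0 < s) :
    HasSum (fun i => b i * Real.exp (-(ℓ i * s)) * P.eval (Real.exp (-(ℓ i * s))))
      (P.sum fun k r => r * ∑' i, b i * Real.exp (-(ℓ i * ((k + 1) * s)))) := by
  refine hasSum_mul_eval (fun k => ?_) P
  refine (hb ((k + 1) * s) (by positivity)).hasSum.congr_fun fun i => ?_
  rw [mul_assoc, ← pow_succ', ← Real.exp_nat_mul]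
  push_cast
  ring_nf

open Polynomial in
lemma tendsto_tsum_mul_exp_mul_eval {L : ℝ}
    (hb : ∀ s > 0, Summable fun i => b i * Real.exp (-(ℓ i * s)))
    (hL : Tendsto (fun s => ∑' i, b i * Real.exp (-(ℓ i * s))) (𝓝[>] 0) (𝓝 L)) (P : ℝ[X]) :
    Tendsto (fun s => ∑' i, b i * Real.exp (-(ℓ i * s)) * P.eval (Real.exp (-(ℓ i * s))))
      (𝓝[>] 0) (𝓝 (P.eval 1 * L)) := by
  have hlim : Tendsto (fun s => P.sum fun k r => r * ∑' i, b i * Real.exp (-(ℓ i * ((k + 1) * s))))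
      (𝓝[>] 0) (𝓝 (P.sum fun _ r => r * L)) :=
    tendsto_finsetSum _ fun k _ =>
      (hL.comp (tendsto_comap.mono_left
        (comap_mulLeft_nhdsGT_zero k.cast_add_one_pos).ge)).const_mul _
  have hval : P.eval 1 * L = P.sum fun _ r => r * L := by
    simp [eval_eq_sum, Polynomial.sum, Finset.sum_mul]
  rw [hval]
  refine hlim.congr' ?_
  filter_upwards [self_mem_nhdsWithin] with s hs
  exact (hasSum_mul_exp_mul_eval hb P hs).tsum_eq.symm

open Polynomial in
lemma integral_eval_zero_one (P : ℝ[X]) :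
    ∫ x in (0 : ℝ)..1, P.eval x = P.sum fun k r => r * (k + 1 : ℝ)⁻¹ := by
  simp_rw [eval_eq_sum, Polynomial.sum]
  rw [intervalIntegral.integral_finsetSum fun k _ => by
    exact Continuous.intervalIntegrable (by fun_prop) _ _]
  simp [intervalIntegral.integral_const_mul]

lemma tendsto_mul_tsum_mul_exp_mul_eval {A : ℝ}
    (hw : ∀ s > 0, Summable fun i => w i * Real.exp (-(ℓ i * s)))
    (hA : Tendsto (fun s => s * ∑' i, w i * Real.exp (-(ℓ i * s))) (𝓝[>] 0) (𝓝 A))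
    (P : Polynomial ℝ) :
    Tendsto (fun s => s * ∑' i, w i * Real.exp (-(ℓ i * s)) * P.eval (Real.exp (-(ℓ i * s))))
      (𝓝[>] 0) (𝓝 ((∫ x in (0 : ℝ)..1, P.eval x) * A)) := by
  have hlim : Tendsto
      (fun s => P.sum fun k r => r * (k + 1 : ℝ)⁻¹ *
        ((k + 1) * s * ∑' i, w i * Real.exp (-(ℓ i * ((k + 1) * s)))))
      (𝓝[>] 0) (𝓝 (P.sum fun k r => r * (k + 1 : ℝ)⁻¹ * A)) :=
    tendsto_finsetSum _ fun k _ =>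
      (hA.comp (tendsto_comap.mono_left
        (comap_mulLeft_nhdsGT_zero k.cast_add_one_pos).ge)).const_mul _
  rw [integral_eval_zero_one, Polynomial.sum, Finset.sum_mul]
  refine hlim.congr' ?_
  filter_upwards [self_mem_nhdsWithin] with s hs
  rw [(hasSum_mul_exp_mul_eval hw P hs).tsum_eq, Polynomial.sum, Polynomial.sum, Finset.mul_sum]
  refine Finset.sum_congr rfl fun k _ => ?_
  field_simp

-- The error bound vanishes at `x = 1`, where `1 - exp (-ℓ s) ≤ ℓ s` turns `|b|` into `s |b| ℓ`.
lemma abs_mul_step_sub_le {b w ℓ s : ℝ} {P R : Polynomial ℝ} (hs : 0 < s) (hℓ : 0 ≤ ℓ)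
    (hbw : |b| * ℓ ≤ w) (hPR : ∀ x ∈ Set.Icc (0 : ℝ) 1,
      |(if 1 / 2 ≤ x then 1 else 0) - (x + x * (1 - x) * P.eval x)| ≤ x * (1 - x) * R.eval x)
    (hR : ∀ x ∈ Set.Icc (0 : ℝ) 1, 0 ≤ R.eval x) :
    |b * (if 1 / 2 ≤ Real.exp (-(ℓ * s)) then 1 else 0) -
        b * Real.exp (-(ℓ * s)) * (1 + (1 - Polynomial.X) * P).eval (Real.exp (-(ℓ * s)))| ≤
      s * (w * Real.exp (-(ℓ * s)) * R.eval (Real.exp (-(ℓ * s)))) := by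
  have hx0 := Real.exp_nonneg (-(ℓ * s))
  have hx1 : Real.exp (-(ℓ * s)) ≤ 1 := Real.exp_le_one_iff.2 (by nlinarith)
  have hx : 1 - Real.exp (-(ℓ * s)) ≤ ℓ * s := by linarith [Real.add_one_le_exp (-(ℓ * s))]
  generalize Real.exp (-(ℓ * s)) = x at *
  have hRx := hR x ⟨hx0, hx1⟩
  calc _ = |b| * |(if 1 / 2 ≤ x then 1 else 0) - (x + x * (1 - x) * P.eval x)| := by
        rw [← abs_mul]
        simp only [Polynomial.eval_add, Polynomial.eval_one, Polynomial.eval_mul,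
          Polynomial.eval_sub, Polynomial.eval_X]
        ring_nf
    _ ≤ |b| * (x * (1 - x) * R.eval x) := by gcongr; exact hPR x ⟨hx0, hx1⟩
    _ = |b| * (1 - x) * (x * R.eval x) := by ring
    _ ≤ |b| * (ℓ * s) * (x * R.eval x) := by gcongr
    _ = s * (|b| * ℓ * (x * R.eval x)) := by ring
    _ ≤ s * (w * (x * R.eval x)) := by gcongr
    _ = _ := by ring

open Polynomial in
lemma tendsto_tsum_mul_step_exp {A L : ℝ} (hℓ : ∀ i, 0 ≤ ℓ i) (hbw : ∀ i, |b i| * ℓ i ≤ w i)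
    (hb : ∀ s > 0, Summable fun i => b i * Real.exp (-(ℓ i * s)))
    (hw : ∀ s > 0, Summable fun i => w i * Real.exp (-(ℓ i * s)))
    (hA : Tendsto (fun s => s * ∑' i, w i * Real.exp (-(ℓ i * s))) (𝓝[>] 0) (𝓝 A))
    (hL : Tendsto (fun s => ∑' i, b i * Real.exp (-(ℓ i * s))) (𝓝[>] 0) (𝓝 L)) :
    Tendsto (fun s => ∑' i, b i * (if 1 / 2 ≤ Real.exp (-(ℓ i * s)) then 1 else 0))
      (𝓝[>] 0) (𝓝 L) := by
  refine Metric.tendsto_nhds.2 fun ε hε => ?_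
  obtain ⟨δ, hδ, hδε⟩ := exists_pos_mul_lt (half_pos hε) (max A 0)
  obtain ⟨P, R, hPR, hR, hRδ⟩ := exists_polynomial_near_step hδ
  have hRA : (∫ x in (0 : ℝ)..1, R.eval x) * A < ε / 2 := by
    have hintegral : 0 ≤ ∫ x in (0 : ℝ)..1, R.eval x :=
      intervalIntegral.integral_nonneg zero_le_one hR
    calc _ ≤ (∫ x in (0 : ℝ)..1, R.eval x) * max A 0 := by gcongr; exact le_max_left ..
      _ ≤ max A 0 * δ := by rw [mul_comm]; gcongr
      _ < ε / 2 := hδε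
  set Q : ℝ[X] := 1 + (1 - X) * P with hQ
  have hLQ := tendsto_tsum_mul_exp_mul_eval hb hL Q
  rw [show Q.eval 1 = 1 by simp [hQ], one_mul] at hLQ
  filter_upwards [(tendsto_mul_tsum_mul_exp_mul_eval hw hA R).eventually_lt_const hRA,
    Metric.tendsto_nhds.1 hLQ _ (half_pos hε), self_mem_nhdsWithin] with s hs₁ hs₂ hs
  have hsumR := (hasSum_mul_exp_mul_eval hw R hs).summable.mul_left s
  have hsumQ := (hasSum_mul_exp_mul_eval hb Q hs).summable
  have hle (i) : ‖b i * (if 1 / 2 ≤ Real.exp (-(ℓ i * s)) then 1 else 0) -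
      b i * Real.exp (-(ℓ i * s)) * Q.eval (Real.exp (-(ℓ i * s)))‖ ≤
      s * (w i * Real.exp (-(ℓ i * s)) * R.eval (Real.exp (-(ℓ i * s)))) :=
    abs_mul_step_sub_le hs (hℓ i) (hbw i) hPR hR
  have hsumb := (summable_iff_of_summable_sub (Summable.of_norm_bounded hsumR hle)).2 hsumQ
  have hdist := tsum_of_norm_bounded hsumR.hasSum hle
  rw [hsumb.tsum_sub hsumQ, tsum_mul_left, ← dist_eq_norm] at hdist
  calc _ ≤ _ := dist_triangle _
        (∑' i, b i * Real.exp (-(ℓ i * s)) * Q.eval (Real.exp (-(ℓ i * s)))) _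
    _ < ε / 2 + ε / 2 := add_lt_add (hdist.trans_lt hs₁) hs₂
    _ = ε := add_halves ε

theorem tendsto_tsum_ite_le_of_tendsto_tsum_mul_exp {A L : ℝ} (hℓ : ∀ i, 0 ≤ ℓ i)
    (hbw : ∀ i, |b i| * ℓ i ≤ w i)
    (hb : ∀ s > 0, Summable fun i => b i * Real.exp (-(ℓ i * s)))
    (hw : ∀ s > 0, Summable fun i => w i * Real.exp (-(ℓ i * s)))
    (hA : Tendsto (fun s => s * ∑' i, w i * Real.exp (-(ℓ i * s))) (𝓝[>] 0) (𝓝 A))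
    (hL : Tendsto (fun s => ∑' i, b i * Real.exp (-(ℓ i * s))) (𝓝[>] 0) (𝓝 L)) :
    Tendsto (fun x => ∑' i, if ℓ i ≤ x then b i else 0) atTop (𝓝 L) := by
  have hs : Tendsto (fun x => Real.log 2 / x) atTop (𝓝[>] 0) := by
    refine tendsto_nhdsWithin_iff.2 ⟨tendsto_const_nhds.div_atTop tendsto_id, ?_⟩
    filter_upwards [eventually_gt_atTop 0] with x hx using div_pos (Real.log_pos one_lt_two) hx
  refine ((tendsto_tsum_mul_step_exp hℓ hbw hb hw hA hL).comp hs).congr' ?_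
  filter_upwards [eventually_gt_atTop 0] with x hx
  refine tsum_congr fun i => ?_
  have hiff : 1 / 2 ≤ Real.exp (-(ℓ i * (Real.log 2 / x))) ↔ ℓ i ≤ x := by
    rw [one_div, ← Real.log_le_iff_le_exp (by norm_num), Real.log_inv, neg_le_neg_iff,
      mul_div_left_comm, mul_le_iff_le_one_right (Real.log_pos one_lt_two), div_le_one hx]
  simp only [hiff, mul_ite, mul_one, mul_zero]

end Tauberian

section VonMangoldt

open ArithmeticFunction (vonMangoldt)

lemma summable_vonMangoldt_div_rpow {s : ℝ} (hs : 1 < s) :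
    Summable fun n : ℕ => vonMangoldt n / (n : ℝ) ^ s := by
  refine (ArithmeticFunction.LSeriesSummable_vonMangoldt (s := s)
    (by simpa using hs)).norm.congr fun n => ?_
  rcases eq_or_ne n 0 with rfl | hn
  · simp
  · simp [hn, abs_of_nonneg ArithmeticFunction.vonMangoldt_nonneg]

open ArithmeticFunction.vonMangoldt in
lemma tendsto_sub_one_mul_tsum_residueClass {q : ℕ} [NeZero q] {a : ZMod q} (ha : IsUnit a) :
    Tendsto (fun s : ℝ => (s - 1) * ∑' n : ℕ, residueClass a n / (n : ℝ) ^ s)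
      (𝓝[>] 1) (𝓝 (q.totient : ℝ)⁻¹) := by
  have htsum {s : ℝ} (hs : 1 < s) : ∑' n : ℕ, residueClass a n / (n : ℝ) ^ s =
      (LFunctionResidueClassAux a s).re + (q.totient : ℝ)⁻¹ / (s - 1) := by
    refine Complex.ofReal_injective ?_
    push_cast [Complex.ofReal_cpow (Nat.cast_nonneg _)]
    rw [← LFunctionResidueClassAux_real ha hs, eqOn_LFunctionResidueClassAux ha
      (by simpa using hs), sub_add_cancel]
    refine tsum_congr fun n => ?_
    rcases eq_or_ne n 0 with rfl | hn
    · simp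
    · rw [LSeries.term_of_ne_zero hn]
  have hcont : ContinuousOn (fun s : ℝ => (LFunctionResidueClassAux a s).re) (Set.Ici 1) :=
    Complex.continuous_re.comp_continuousOn <| (continuousOn_LFunctionResidueClassAux a).comp
      Complex.continuous_ofReal.continuousOn fun s hs => by simpa using hs
  have haux : Tendsto (fun s : ℝ => (LFunctionResidueClassAux a s).re) (𝓝[>] 1)
      (𝓝 (LFunctionResidueClassAux a (1 : ℝ)).re) :=
    (hcont 1 Set.self_mem_Ici).mono_left (nhdsWithin_mono _ Set.Ioi_subset_Ici_self)
  have hsub : Tendsto (fun s : ℝ => s - 1) (𝓝[>] 1) (𝓝 0) :=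
    tendsto_nhdsWithin_of_tendsto_nhds (by simpa using (continuous_sub_right (1 : ℝ)).tendsto 1)
  have hlim := (hsub.mul haux).add_const (q.totient : ℝ)⁻¹
  rw [zero_mul, zero_add] at hlim
  refine hlim.congr' ?_
  filter_upwards [self_mem_nhdsWithin] with s hs
  rw [htsum hs, mul_add, mul_div_cancel₀ _ (sub_pos.2 hs).ne']

lemma tendsto_sub_one_mul_tsum_vonMangoldt :
    Tendsto (fun s : ℝ => (s - 1) * ∑' n : ℕ, vonMangoldt n / (n : ℝ) ^ s) (𝓝[>] 1) (𝓝 1) := by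
  have hclass (n : ℕ) : vonMangoldt.residueClass (1 : ZMod 1) n = vonMangoldt n :=
    if_pos (Subsingleton.elim (n : ZMod 1) 1)
  simpa [hclass] using tendsto_sub_one_mul_tsum_residueClass (isUnit_one (M := ZMod 1))

lemma tendsto_one_add_nhdsGT : Tendsto (fun s : ℝ => 1 + s) (𝓝[>] 0) (𝓝[>] 1) := by
  refine tendsto_nhdsWithin_iff.2 ⟨tendsto_nhdsWithin_of_tendsto_nhds ?_, ?_⟩
  · simpa using (continuous_const_add (1 : ℝ)).tendsto 0
  · filter_upwards [self_mem_nhdsWithin] with s (hs : 0 < s) using lt_add_of_pos_right 1 hs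

lemma vonMangoldt_div_mul_exp_neg_log_mul {s : ℝ} (n : ℕ) :
    vonMangoldt n / n * Real.exp (-(Real.log n * s)) = vonMangoldt n / (n : ℝ) ^ (1 + s) := by
  rcases n.eq_zero_or_pos with rfl | hn
  · simp
  · have hn0 : (0 : ℝ) < n := by exact_mod_cast hn
    rw [Real.rpow_add hn0, Real.rpow_one, Real.exp_neg, Real.exp_mul, Real.exp_log hn0, ← div_div,
      div_eq_mul_inv (_ / _)]

theorem tendsto_sum_range_of_tendsto_tsum_mul_rpow {b : ℕ → ℝ} {L C : ℝ} (hb0 : b 0 = 0)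
    (hbΛ : ∀ n, |b n| * Real.log n ≤ C * (vonMangoldt n / n))
    (hb : ∀ s > (0 : ℝ), Summable fun n : ℕ => b n * (n : ℝ) ^ (-s))
    (hL : Tendsto (fun s : ℝ => ∑' n : ℕ, b n * (n : ℝ) ^ (-s)) (𝓝[>] 0) (𝓝 L)) :
    Tendsto (fun N : ℕ => ∑ n ∈ Finset.range (N + 1), b n) atTop (𝓝 L) := by
  have hbexp (n : ℕ) (s : ℝ) : b n * (n : ℝ) ^ (-s) = b n * Real.exp (-(Real.log n * s)) := by
    rcases n.eq_zero_or_pos with rfl | hn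
    · simp [hb0]
    · rw [Real.rpow_def_of_pos (by exact_mod_cast hn), mul_neg]
  simp only [hbexp] at hb hL
  have hwexp (n : ℕ) (s : ℝ) : C * (vonMangoldt n / n) * Real.exp (-(Real.log n * s)) =
      C * (vonMangoldt n / (n : ℝ) ^ (1 + s)) := by
    rw [mul_assoc, vonMangoldt_div_mul_exp_neg_log_mul]
  have hlim := tendsto_tsum_ite_le_of_tendsto_tsum_mul_exp (A := C * 1)
    (fun n : ℕ => Real.log_natCast_nonneg n) hbΛ hb
    (fun s hs => by
      simpa only [hwexp] using
        (summable_vonMangoldt_div_rpow (lt_add_of_pos_right 1 hs)).mul_left C)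
    (((tendsto_sub_one_mul_tsum_vonMangoldt.comp tendsto_one_add_nhdsGT).const_mul C).congr
      fun s => by
        simp only [hwexp, tsum_mul_left, Function.comp, add_sub_cancel_left, mul_left_comm])
    hL
  refine (hlim.comp (Real.tendsto_log_atTop.comp tendsto_natCast_atTop_atTop)).congr' ?_
  filter_upwards [eventually_gt_atTop 0] with N hN
  have hiff {n : ℕ} (hn : n ≠ 0) : Real.log n ≤ Real.log N ↔ n ∈ Finset.range (N + 1) := by
    rw [Real.log_le_log_iff (by positivity) (by positivity), Nat.cast_le, Finset.mem_range_succ_iff]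
  rw [Function.comp_apply, Function.comp_apply, tsum_eq_sum (s := Finset.range (N + 1))]
  · refine Finset.sum_congr rfl fun n hn => ?_
    rcases eq_or_ne n 0 with rfl | hn0
    · simp [hb0]
    · rw [if_pos ((hiff hn0).2 hn)]
  · intro n hn
    rcases eq_or_ne n 0 with rfl | hn0
    · simp [hb0]
    · rw [if_neg (mt (hiff hn0).1 hn)]

end VonMangoldt

section EulerProduct

lemma abs_log_one_add_sub_le_sq {u : ℝ} (hu : 0 ≤ u) : |Real.log (1 + u) - u| ≤ u ^ 2 := by
  have hupper := Real.log_le_sub_one_of_pos (by positivity : 0 < 1 + u)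
  have hlower := Real.le_log_one_add_of_nonneg hu
  have hsq : u - 2 * u / (u + 2) ≤ u ^ 2 := by
    rw [sub_le_iff_le_add', ← sub_le_iff_le_add, le_div_iff₀ (by positivity)]
    nlinarith [pow_nonneg hu 3]
  rw [abs_of_nonpos (by linarith)]
  linarith

lemma tsum_mul_pow_eq_add {c : ℕ → ℝ} {x : ℝ} (h : Summable fun k => c k * x ^ k) :
    ∑' k, c k * x ^ k = c 0 + x * ∑' k, c (k + 1) * x ^ k := by
  rw [h.tsum_eq_zero_add, pow_zero, mul_one, ← tsum_mul_left]
  simp only [pow_succ', mul_left_comm]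

section PowerSeries

variable {B c : ℕ → ℝ} {r : ℝ}

lemma summable_mul_pow_add (hr : 0 < r) (hB : Summable fun k => B k * r ^ k) (j : ℕ) :
    Summable fun k => B (k + j) * r ^ k := by
  refine (((summable_nat_add_iff j).2 hB).mul_right (r ^ j)⁻¹).congr fun k => ?_
  rw [pow_add]
  field_simp

lemma norm_mul_pow_le (hc : ∀ k, 0 ≤ c k) (hcB : ∀ k, c k ≤ B k) {x : ℝ} (hx : x ∈ Set.Icc 0 r)
    (k : ℕ) : ‖c k * x ^ k‖ ≤ B k * r ^ k := by
  rw [Real.norm_of_nonneg (mul_nonneg (hc k) (pow_nonneg hx.1 k))]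
  exact mul_le_mul (hcB k) (pow_le_pow_left₀ hx.1 hx.2 k) (pow_nonneg hx.1 k)
    ((hc k).trans (hcB k))

lemma continuousOn_tsum_mul_pow (hB : Summable fun k => B k * r ^ k) (hc : ∀ k, 0 ≤ c k)
    (hcB : ∀ k, c k ≤ B k) : ContinuousOn (fun x => ∑' k, c k * x ^ k) (Set.Icc 0 r) :=
  continuousOn_tsum (fun _ => by fun_prop) hB fun k _ hx => norm_mul_pow_le hc hcB hx k

lemma one_le_tsum_mul_pow (hB : Summable fun k => B k * r ^ k) (hc0 : c 0 = 1)
    (hc : ∀ k, 0 ≤ c k) (hcB : ∀ k, c k ≤ B k) {x : ℝ} (hx : x ∈ Set.Icc 0 r) :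
    1 ≤ ∑' k, c k * x ^ k := by
  have hsum : Summable fun k => c k * x ^ k :=
    .of_norm_bounded hB (norm_mul_pow_le hc hcB hx)
  simpa [hc0] using hsum.le_tsum 0 fun k _ => mul_nonneg (hc k) (pow_nonneg hx.1 k)

lemma exists_abs_log_tsum_mul_pow_sub_le (hr : 0 < r) (hB : Summable fun k => B k * r ^ k) :
    ∃ K, ∀ c : ℕ → ℝ, c 0 = 1 → (∀ k, 0 ≤ c k) → (∀ k, c k ≤ B k) → ∀ x ∈ Set.Icc 0 r,
      |Real.log (∑' k, c k * x ^ k) - c 1 * x| ≤ K * x ^ 2 := by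
  refine ⟨(∑' k, B (k + 1) * r ^ k) ^ 2 + ∑' k, B (k + 2) * r ^ k, fun c hc0 hc hcB x hx => ?_⟩
  have hsum (j : ℕ) : Summable fun k => c (k + j) * x ^ k :=
    .of_norm_bounded (summable_mul_pow_add hr hB j)
      (norm_mul_pow_le (fun _ => hc _) (fun _ => hcB _) hx)
  have htail (j : ℕ) : 0 ≤ ∑' k, c (k + j) * x ^ k ∧
      ∑' k, c (k + j) * x ^ k ≤ ∑' k, B (k + j) * r ^ k :=
    ⟨tsum_nonneg fun k => mul_nonneg (hc _) (pow_nonneg hx.1 k),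
      (hsum j).tsum_le_tsum (fun k => (le_abs_self _).trans
        (norm_mul_pow_le (fun _ => hc _) (fun _ => hcB _) hx k)) (summable_mul_pow_add hr hB j)⟩
  set u := x * ∑' k, c (k + 1) * x ^ k with hu
  have hlog : ∑' k, c k * x ^ k = 1 + u := hc0 ▸ tsum_mul_pow_eq_add (hsum 0)
  have hlin : u - c 1 * x = x ^ 2 * ∑' k, c (k + 2) * x ^ k := by
    rw [hu, tsum_mul_pow_eq_add (c := fun k => c (k + 1)) (hsum 1)]
    ring
  have husq : u ^ 2 ≤ (∑' k, B (k + 1) * r ^ k) ^ 2 * x ^ 2 := by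
    rw [hu, mul_pow, mul_comm]
    exact mul_le_mul_of_nonneg_right (pow_le_pow_left₀ (htail 1).1 (htail 1).2 2) (sq_nonneg x)
  calc |Real.log (∑' k, c k * x ^ k) - c 1 * x|
      ≤ |Real.log (1 + u) - u| + |u - c 1 * x| := hlog ▸ abs_sub_le _ _ _
    _ ≤ u ^ 2 + x ^ 2 * ∑' k, c (k + 2) * x ^ k := by
        rw [hlin, abs_of_nonneg (mul_nonneg (sq_nonneg x) (htail 2).1)]
        gcongr
        exact abs_log_one_add_sub_le_sq (mul_nonneg hx.1 (htail 1).1)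
    _ ≤ (∑' k, B (k + 1) * r ^ k) ^ 2 * x ^ 2 + x ^ 2 * ∑' k, B (k + 2) * r ^ k :=
        add_le_add husq (mul_le_mul_of_nonneg_left (htail 2).2 (sq_nonneg x))
    _ = _ := by ring

end PowerSeries

lemma log_tsum_eq_tsum_primes_log_tsum_pow {f : ℕ → ℝ} (hf0 : f 0 = 0) (hf1 : f 1 = 1)
    (hf : ∀ n, 0 ≤ f n) (hmul : ∀ m n : ℕ, m.Coprime n → f (m * n) = f m * f n)
    (hsum : Summable f) (hlog : Summable fun p : Nat.Primes => Real.log (∑' k, f (p ^ k))) :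
    Real.log (∑' n, f n) = ∑' p : Nat.Primes, Real.log (∑' k, f (p ^ k)) := by
  have hpos (p : Nat.Primes) : 0 < ∑' k, f (p ^ k) := by
    have hpow := hsum.comp_injective (Nat.pow_right_injective p.2.two_le)
    exact hpow.tsum_pos (fun k => hf _) 0 (by simp [hf1])
  rw [← EulerProduct.eulerProduct_tprod hf1 (hmul _ _) hsum.norm hf0,
    ← Real.rexp_tsum_eq_tprod hpos hlog, Real.log_exp]

lemma rpow_neg_mem_Icc (p : Nat.Primes) {s : ℝ} (hs : 1 ≤ s) :
    (p : ℝ) ^ (-s) ∈ Set.Icc 0 (1 / 2) := by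
  have hp : (2 : ℝ) ≤ p := by exact_mod_cast p.2.two_le
  refine ⟨by positivity, ?_⟩
  calc (p : ℝ) ^ (-s) ≤ (p : ℝ) ^ (-1 : ℝ) := by gcongr; linarith
    _ ≤ 1 / 2 := by rw [Real.rpow_neg_one, one_div]; gcongr

lemma mul_natCast_pow_rpow_neg (y : ℝ) (n k : ℕ) (s : ℝ) :
    y * ((n ^ k : ℕ) : ℝ) ^ (-s) = y * ((n : ℝ) ^ (-s)) ^ k := by
  rw [Nat.cast_pow, ← Real.rpow_natCast_mul n.cast_nonneg, mul_comm (k : ℝ),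
    Real.rpow_mul_natCast n.cast_nonneg]

section LocalFactors

variable {a B : ℕ → ℝ}

lemma tendsto_log_tsum_pow_sub (p : Nat.Primes) (ha : ∀ n, 0 ≤ a n) (ha1 : a 1 = 1)
    (haB : ∀ k, a (p ^ k) ≤ B k) (hB : Summable fun k => B k * (1 / 2) ^ k) :
    Tendsto (fun s : ℝ => Real.log (∑' k, a (p ^ k) * ((p : ℝ) ^ (-s)) ^ k) - a p * (p : ℝ) ^ (-s))
      (𝓝[>] 1) (𝓝 (Real.log (∑' k, a (p ^ k) * ((p : ℝ) ^ (-1 : ℝ)) ^ k) -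
        a p * (p : ℝ) ^ (-1 : ℝ))) := by
  have hp : (p : ℝ) ≠ 0 := by exact_mod_cast p.2.ne_zero
  have hrpow : Tendsto (fun s : ℝ => (p : ℝ) ^ (-s)) (𝓝[>] 1) (𝓝 ((p : ℝ) ^ (-1 : ℝ))) :=
    tendsto_nhdsWithin_of_tendsto_nhds
      (((Real.continuous_const_rpow hp).comp continuous_neg).tendsto 1)
  have hmem : ∀ᶠ s in 𝓝[>] (1 : ℝ), (p : ℝ) ^ (-s) ∈ Set.Icc 0 (1 / 2) := by
    filter_upwards [self_mem_nhdsWithin] with s hs using rpow_neg_mem_Icc p (le_of_lt hs)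
  have hone := rpow_neg_mem_Icc p le_rfl
  have hpos := one_le_tsum_mul_pow hB (by rw [pow_zero, ha1]) (fun k => ha (p ^ k)) haB hone
  have hcont := continuousOn_tsum_mul_pow hB (fun k => ha (p ^ k)) haB _ hone
  exact ((hcont.tendsto.comp (tendsto_nhdsWithin_iff.2 ⟨hrpow, hmem⟩)).log
    (zero_lt_one.trans_le hpos).ne').sub (hrpow.const_mul _)

lemma summable_inv_primes_sq : Summable fun p : Nat.Primes => ((p : ℝ) ^ (-1 : ℝ)) ^ 2 := by
  simpa [← Real.rpow_mul_natCast] using Nat.Primes.summable_rpow.2 (by norm_num : (-2 : ℝ) < -1)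

theorem exists_tendsto_log_tsum_sub_tsum_primes (ha : ∀ n, 0 ≤ a n) (ha1 : a 1 = 1)
    (hmul : ∀ m n : ℕ, m.Coprime n → a (m * n) = a m * a n)
    (haB : ∀ p : ℕ, p.Prime → ∀ k, a (p ^ k) ≤ B k) (hB : Summable fun k => B k * (1 / 2) ^ k)
    (hsum : ∀ s > (1 : ℝ), Summable fun n : ℕ => a n * (n : ℝ) ^ (-s)) :
    ∃ M, Tendsto (fun s : ℝ => Real.log (∑' n : ℕ, a n * (n : ℝ) ^ (-s)) -
      ∑' p : Nat.Primes, a p * (p : ℝ) ^ (-s)) (𝓝[>] 1) (𝓝 M) := by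
  obtain ⟨K, hK⟩ := exists_abs_log_tsum_mul_pow_sub_le one_half_pos hB
  have hbound {s : ℝ} (hs : 1 ≤ s) (p : Nat.Primes) :
      ‖Real.log (∑' k, a (p ^ k) * ((p : ℝ) ^ (-s)) ^ k) - a p * (p : ℝ) ^ (-s)‖ ≤
        |K| * ((p : ℝ) ^ (-1 : ℝ)) ^ 2 := by
    have hp : (1 : ℝ) ≤ p := by exact_mod_cast p.2.one_le
    calc _ ≤ K * ((p : ℝ) ^ (-s)) ^ 2 := by
          simpa using hK (fun k => a (p ^ k)) (by rw [pow_zero, ha1]) (fun k => ha _)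
            (haB p p.2) _ (rpow_neg_mem_Icc p hs)
      _ ≤ |K| * ((p : ℝ) ^ (-1 : ℝ)) ^ 2 := by gcongr; exact le_abs_self K
  have hsumK := summable_inv_primes_sq.mul_left |K|
  refine ⟨_, (tendsto_tsum_of_dominated_convergence hsumK
    (fun p => tendsto_log_tsum_pow_sub p ha ha1 (haB p p.2) hB) ?_).congr' ?_⟩
  · filter_upwards [self_mem_nhdsWithin] with s hs using hbound (le_of_lt hs)
  · filter_upwards [self_mem_nhdsWithin] with s (hs : 1 < s)
    have hsumPrimes : Summable fun p : Nat.Primes => a p * (p : ℝ) ^ (-s) :=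
      (hsum s hs).comp_injective Nat.Primes.coe_nat_injective
    have hsumLog := (summable_iff_of_summable_sub
      (Summable.of_norm_bounded hsumK (hbound hs.le))).2 hsumPrimes
    rw [hsumLog.tsum_sub hsumPrimes, log_tsum_eq_tsum_primes_log_tsum_pow
      (f := fun n : ℕ => a n * (n : ℝ) ^ (-s))]
    · simp only [mul_natCast_pow_rpow_neg]
    · simp [Real.zero_rpow (neg_ne_zero.2 (zero_lt_one.trans hs).ne')]
    · simp [ha1]
    · exact fun n => mul_nonneg (ha n) (by positivity)
    · intro m n hmn
      rw [hmul m n hmn, Nat.cast_mul, Real.mul_rpow m.cast_nonneg n.cast_nonneg, mul_mul_mul_comm]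
    · exact hsum s hs
    · simpa only [mul_natCast_pow_rpow_neg] using hsumLog

theorem exists_tendsto_tsum_primes_add_log_sub_one {ρ : ℝ} (hρ : 0 < ρ) (ha : ∀ n, 0 ≤ a n)
    (ha1 : a 1 = 1) (hmul : ∀ m n : ℕ, m.Coprime n → a (m * n) = a m * a n)
    (haB : ∀ p : ℕ, p.Prime → ∀ k, a (p ^ k) ≤ B k) (hB : Summable fun k => B k * (1 / 2) ^ k)
    (hsum : ∀ s > (1 : ℝ), Summable fun n : ℕ => a n * (n : ℝ) ^ (-s))
    (hres : Tendsto (fun s : ℝ => (s - 1) * ∑' n : ℕ, a n * (n : ℝ) ^ (-s)) (𝓝[>] 1) (𝓝 ρ)) :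
    ∃ M, Tendsto (fun s : ℝ => ∑' p : Nat.Primes, a p * (p : ℝ) ^ (-s) + Real.log (s - 1))
      (𝓝[>] 1) (𝓝 M) := by
  obtain ⟨M, hM⟩ := exists_tendsto_log_tsum_sub_tsum_primes ha ha1 hmul haB hB hsum
  refine ⟨_, ((hres.log hρ.ne').sub hM).congr' ?_⟩
  filter_upwards [self_mem_nhdsWithin, hres.eventually_ne hρ.ne'] with s hs hne
  rw [Real.log_mul (sub_pos.2 hs).ne' (right_ne_zero_of_mul hne)]
  ring

end LocalFactors

lemma exists_tendsto_tsum_primes_rpow_add_log_sub_one :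
    ∃ M, Tendsto (fun s : ℝ => ∑' p : Nat.Primes, (p : ℝ) ^ (-s) + Real.log (s - 1))
      (𝓝[>] 1) (𝓝 M) := by
  simpa using exists_tendsto_tsum_primes_add_log_sub_one (a := fun _ => 1) (B := fun _ => 1)
    one_pos (fun _ => zero_le_one) rfl (fun _ _ _ => (mul_one 1).symm) (fun _ _ _ => le_rfl)
    (by simpa using summable_geometric_two)
    (fun s hs => by simpa using Real.summable_nat_rpow.2 (by linarith : -s < -1))
    (by simpa [Real.rpow_neg] using tendsto_sub_mul_tsum_nat_rpow)

end EulerProduct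

section IdealCount

open UniqueFactorizationMonoid

/-- The number of ideals of `S` of absolute norm `n`. For the ring of integers of a number field
these are the coefficients of its Dedekind zeta function. -/
noncomputable def idealCount (S : Type*) [CommRing S] [IsDedekindDomain S] [Module.Free ℤ S]
    (n : ℕ) : ℕ :=
  Nat.card {I : Ideal S // Ideal.absNorm I = n}

lemma mul_sup_eq_left_of_isCoprime {R : Type*} [CommRing R] {I J A : Ideal R} (hA : A ≤ I)
    (hJ : IsCoprime J A) : I * J ⊔ A = I := by
  apply le_antisymm (sup_le Ideal.mul_le_left hA)
  calc I = I * J ⊔ I * A := by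
        rw [← Ideal.mul_sup, Ideal.isCoprime_iff_sup_eq.mp hJ, Ideal.mul_top]
    _ ≤ I * J ⊔ A := sup_le_sup_left Ideal.mul_le_right _

lemma sup_mul_sup_eq_of_isCoprime {R : Type*} [CommRing R] {I A B : Ideal R}
    (hAB : IsCoprime A B) (hI : A * B ≤ I) : (I ⊔ A) * (I ⊔ B) = I := by
  apply le_antisymm
  · rw [Ideal.sup_mul, Ideal.mul_sup, Ideal.mul_sup]
    exact sup_le (sup_le Ideal.mul_le_left Ideal.mul_le_left) (sup_le Ideal.mul_le_right hI)
  · calc I = A * I ⊔ I * B := by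
          rw [mul_comm A, ← Ideal.mul_sup, Ideal.isCoprime_iff_sup_eq.mp hAB, Ideal.mul_top]
      _ ≤ (I ⊔ A) * (I ⊔ B) :=
          sup_le (Ideal.mul_mono le_sup_right le_sup_left)
            (Ideal.mul_mono le_sup_left le_sup_right)

lemma isCoprime_span_natCast {R : Type*} [CommRing R] {m n : ℕ} (h : m.Coprime n) :
    IsCoprime (Ideal.span {(m : R)}) (Ideal.span {(n : R)}) :=
  (Ideal.isCoprime_span_singleton_iff _ _).mpr h.cast

lemma mem_primesOver_span_natCast_iff {R : Type*} [CommRing R] {p : ℕ} (hp : p.Prime)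
    {P : Ideal R} : P ∈ Ideal.primesOver (Ideal.span {(p : ℤ)}) R ↔ P.IsPrime ∧ (p : R) ∈ P := by
  refine and_congr_right fun hP => ?_
  rw [Ideal.liesOver_span_iff hP.ne_top (Nat.prime_iff_prime_int.mp hp)]
  simp

lemma card_primesOver_le_finrank {R S : Type*} [CommRing R] [IsDomain R] [CommRing S]
    [Algebra R S] [Module.Finite R S] [Module.Flat R S] (P : Ideal R) [P.IsPrime] :
    Nat.card (P.primesOver S) ≤ Module.finrank R S := by
  have := (Algebra.QuasiFinite.finite_primesOver (S := S) P).fintype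
  rw [← Ideal.sum_ramification_inertia_eq_finrank P, Nat.card_eq_fintype_card,
    Fintype.card_eq_sum_ones]
  refine Finset.sum_le_sum fun Q _ => ?_
  have := Q.2.1
  have := Q.2.2
  exact Nat.mul_pos (Ideal.ramificationIdx_pos _ _) (Ideal.inertiaDeg_pos _ _)

variable {S : Type*} [CommRing S] [IsDedekindDomain S] [Module.Free ℤ S]

lemma span_absNorm_le (I : Ideal S) : Ideal.span {(Ideal.absNorm I : S)} ≤ I :=
  (Ideal.span_singleton_le_iff_mem I).mpr (Ideal.absNorm_mem I)

lemma mul_sup_span_absNorm_left {I J : Ideal S}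
    (h : (Ideal.absNorm I).Coprime (Ideal.absNorm J)) :
    I * J ⊔ Ideal.span {(Ideal.absNorm I : S)} = I :=
  mul_sup_eq_left_of_isCoprime (span_absNorm_le I)
    ((isCoprime_span_natCast h.symm).of_isCoprime_of_dvd_left
      (Ideal.dvd_iff_le.mpr (span_absNorm_le J)))

lemma sup_span_mul_sup_span {I : Ideal S} {m n : ℕ} (hI : Ideal.absNorm I = m * n)
    (h : m.Coprime n) : (I ⊔ Ideal.span {(m : S)}) * (I ⊔ Ideal.span {(n : S)}) = I := by
  refine sup_mul_sup_eq_of_isCoprime (isCoprime_span_natCast h) ?_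
  rw [Ideal.span_singleton_mul_span_singleton, ← Nat.cast_mul, ← hI]
  exact span_absNorm_le I

lemma mem_primesOver_of_mem_normalizedFactors {I P : Ideal S} {p k : ℕ} (hp : p.Prime)
    (hI : Ideal.absNorm I = p ^ k) (hP : P ∈ normalizedFactors I) :
    P ∈ Ideal.primesOver (Ideal.span {(p : ℤ)}) S := by
  have hprime := Ideal.isPrime_of_prime (prime_of_normalized_factor P hP)
  refine (mem_primesOver_span_natCast_iff hp).mpr ⟨hprime, hprime.mem_of_pow_mem k ?_⟩
  rw [← Nat.cast_pow, ← hI]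
  exact Ideal.le_of_dvd (dvd_of_mem_normalizedFactors hP) (Ideal.absNorm_mem I)

lemma count_normalizedFactors_le_of_absNorm_eq_pow [DecidableEq (Ideal S)] {I P : Ideal S}
    {p k : ℕ} (hp : p.Prime) (hI : Ideal.absNorm I = p ^ k) (hP : p ∣ Ideal.absNorm P) :
    (normalizedFactors I).count P ≤ k := by
  have hI0 : I ≠ 0 := ne_zero_of_map (f := Ideal.absNorm) (hI ▸ pow_ne_zero k hp.ne_zero)
  have hdvd : P ^ (normalizedFactors I).count P ∣ I := by
    have h := Multiset.prod_dvd_prod_of_le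
      (Multiset.le_count_iff_replicate_le.mp (le_refl ((normalizedFactors I).count P)))
    rwa [Multiset.prod_replicate, associated_iff_eq.mp (prod_normalizedFactors hI0)] at h
  refine (Nat.pow_dvd_pow_iff_le_right hp.one_lt).mp ((pow_dvd_pow_of_dvd hP _).trans ?_)
  rw [← map_pow, ← hI]
  exact map_dvd Ideal.absNorm hdvd

lemma eq_of_count_normalizedFactors_eq [DecidableEq (Ideal S)] {I J : Ideal S} {p k : ℕ}
    (hp : p.Prime) (hI : Ideal.absNorm I = p ^ k) (hJ : Ideal.absNorm J = p ^ k)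
    (h : ∀ P ∈ Ideal.primesOver (Ideal.span {(p : ℤ)}) S,
      (normalizedFactors I).count P = (normalizedFactors J).count P) : I = J := by
  have hpk : p ^ k ≠ 0 := pow_ne_zero k hp.ne_zero
  refine associated_iff_eq.mp ((associated_iff_normalizedFactors_eq_normalizedFactors
    (ne_zero_of_map (f := Ideal.absNorm) (hI ▸ hpk))
    (ne_zero_of_map (f := Ideal.absNorm) (hJ ▸ hpk))).mpr (Multiset.ext.mpr fun P => ?_))
  by_cases hP : P ∈ Ideal.primesOver (Ideal.span {(p : ℤ)}) S
  · exact h P hP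
  · rw [Multiset.count_eq_zero_of_notMem
        fun hPI => hP (mem_primesOver_of_mem_normalizedFactors hp hI hPI),
      Multiset.count_eq_zero_of_notMem
        fun hPJ => hP (mem_primesOver_of_mem_normalizedFactors hp hJ hPJ)]

theorem idealCount_one : idealCount S 1 = 1 := by
  simp [idealCount, Ideal.absNorm_eq_one_iff]

variable [Module.Finite ℤ S]

lemma absNorm_sup_span_dvd {I : Ideal S} {m n : ℕ} (hI : Ideal.absNorm I = m * n)
    (h : m.Coprime n) : Ideal.absNorm (I ⊔ Ideal.span {(m : S)}) ∣ m := by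
  have hdvd_mul : Ideal.absNorm (I ⊔ Ideal.span {(m : S)}) ∣ m * n :=
    hI ▸ Ideal.absNorm_dvd_absNorm_of_le le_sup_left
  have hdvd_pow : Ideal.absNorm (I ⊔ Ideal.span {(m : S)}) ∣ m ^ Module.finrank ℤ S := by
    rw [← Ideal.absNorm_span_natCast]
    exact Ideal.absNorm_dvd_absNorm_of_le le_sup_right
  exact ((h.pow_left _).coprime_dvd_left hdvd_pow).dvd_of_dvd_mul_right hdvd_mul

lemma absNorm_sup_span {I : Ideal S} {m n : ℕ} (hI : Ideal.absNorm I = m * n)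
    (h : m.Coprime n) : Ideal.absNorm (I ⊔ Ideal.span {(m : S)}) = m := by
  refine Nat.dvd_antisymm (absNorm_sup_span_dvd hI h) ?_
  have hn := absNorm_sup_span_dvd (hI.trans (mul_comm m n)) h.symm
  refine (h.coprime_dvd_right hn).dvd_of_dvd_mul_right ?_
  rw [← map_mul, sup_span_mul_sup_span hI h, hI]
  exact dvd_mul_right m n

theorem idealCount_mul_of_coprime {m n : ℕ} (h : m.Coprime n) :
    idealCount S (m * n) = idealCount S m * idealCount S n := by
  rw [idealCount, idealCount, idealCount, ← Nat.card_prod]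
  refine Nat.card_congr
    { toFun := fun I => ⟨⟨_, absNorm_sup_span I.2 h⟩,
        ⟨_, absNorm_sup_span (I.2.trans (mul_comm m n)) h.symm⟩⟩
      invFun := fun IJ => ⟨IJ.1.1 * IJ.2.1, by rw [map_mul, IJ.1.2, IJ.2.2]⟩
      left_inv := fun I => Subtype.ext (sup_span_mul_sup_span I.2 h)
      right_inv := ?_ }
  rintro ⟨⟨I, rfl⟩, ⟨J, rfl⟩⟩
  have hJ : I * J ⊔ Ideal.span {(Ideal.absNorm J : S)} = J := by
    rw [mul_comm, mul_sup_span_absNorm_left h.symm]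
  simp [mul_sup_span_absNorm_left h, hJ]

lemma dvd_absNorm_of_mem_primesOver {P : Ideal S} {p : ℕ} (hp : p.Prime)
    (hP : P ∈ Ideal.primesOver (Ideal.span {(p : ℤ)}) S) : p ∣ Ideal.absNorm P := by
  have := hP.1
  have := hP.2
  have := Fact.mk hp
  rw [← Ideal.pow_inertiaDeg p P]
  exact dvd_pow_self p (Ideal.inertiaDeg_pos _ _).ne'

theorem idealCount_prime_pow_le {p : ℕ} (hp : p.Prime) (k : ℕ) :
    idealCount S (p ^ k) ≤ (k + 1) ^ Module.finrank ℤ S := by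
  classical
  have hprime : (Ideal.span {(p : ℤ)}).IsPrime :=
    (Ideal.span_singleton_prime (by exact_mod_cast hp.ne_zero)).mpr (Nat.prime_iff_prime_int.mp hp)
  set T := Ideal.primesOver (Ideal.span {(p : ℤ)}) S
  have : Finite T := Algebra.QuasiFinite.finite_primesOver _
  let multiplicities : {I : Ideal S // Ideal.absNorm I = p ^ k} → T → Fin (k + 1) := fun I P =>
    ⟨(normalizedFactors I.1).count P.1, Nat.lt_succ_of_le
      (count_normalizedFactors_le_of_absNorm_eq_pow hp I.2 (dvd_absNorm_of_mem_primesOver hp P.2))⟩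
  have hinj : Function.Injective multiplicities := fun I J hIJ =>
    Subtype.ext <| eq_of_count_normalizedFactors_eq hp I.2 J.2 fun P hP => by
      simpa [multiplicities] using congrFun hIJ ⟨P, hP⟩
  calc idealCount S (p ^ k) ≤ Nat.card (T → Fin (k + 1)) :=
        Nat.card_le_card_of_injective multiplicities hinj
    _ = (k + 1) ^ Nat.card T := by rw [Nat.card_fun, Nat.card_fin]
    _ ≤ (k + 1) ^ Module.finrank ℤ S :=
        Nat.pow_le_pow_right k.succ_pos (card_primesOver_le_finrank _)

end IdealCount

section DedekindZeta

lemma LSeries_term_ofReal (f : ℕ → ℝ) {s : ℝ} (hs : s ≠ 0) (n : ℕ) :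
    LSeries.term (fun n => (f n : ℂ)) s n = ((f n * (n : ℝ) ^ (-s) : ℝ) : ℂ) := by
  rcases eq_or_ne n 0 with rfl | hn
  · simp [Real.zero_rpow (neg_ne_zero.mpr hs)]
  · rw [LSeries.term_of_ne_zero hn, Real.rpow_neg n.cast_nonneg, ← div_eq_mul_inv,
      Complex.ofReal_div, Complex.ofReal_cpow n.cast_nonneg, Complex.ofReal_natCast]

lemma LSeriesSummable_ofReal_iff {f : ℕ → ℝ} {s : ℝ} (hs : s ≠ 0) :
    LSeriesSummable (fun n => (f n : ℂ)) s ↔ Summable fun n : ℕ => f n * (n : ℝ) ^ (-s) := by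
  simp only [LSeriesSummable, funext (LSeries_term_ofReal f hs), Complex.summable_ofReal]

lemma LSeries_ofReal (f : ℕ → ℝ) {s : ℝ} (hs : s ≠ 0) :
    LSeries (fun n => (f n : ℂ)) s = ((∑' n : ℕ, f n * (n : ℝ) ^ (-s) : ℝ) : ℂ) := by
  rw [LSeries, Complex.ofReal_tsum]
  exact tsum_congr (LSeries_term_ofReal f hs)

-- A divergent L-series has the junk value `0`, which a nonzero limit excludes near `1`.
lemma LSeriesSummable_of_tendsto_sub_one_mul {f : ℕ → ℂ} {ρ : ℂ} (hρ : ρ ≠ 0)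
    (h : Tendsto (fun s : ℝ => (s - 1) * LSeries f s) (𝓝[>] 1) (𝓝 ρ)) {s : ℂ}
    (hs : 1 < s.re) : LSeriesSummable f s := by
  obtain ⟨r, hr, -, hrs⟩ := ((h.eventually_ne hρ).and (Ioo_mem_nhdsGT hs)).exists
  refine LSeriesSummable.of_re_le_re (s := r) (by simpa using hrs.le) ?_
  by_contra hdiv
  exact hr (by rw [LSeries, tsum_eq_zero_of_not_summable hdiv, mul_zero])

open NumberField

variable (K : Type*) [Field K] [NumberField K]

lemma dedekindZeta_eq_LSeries_idealCount :
    dedekindZeta K = LSeries fun n => ((idealCount (𝓞 K) n : ℝ) : ℂ) := by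
  ext s
  simp only [dedekindZeta, idealCount, Complex.ofReal_natCast]

lemma summable_idealCount_mul_rpow_neg {s : ℝ} (hs : 1 < s) :
    Summable fun n : ℕ => (idealCount (𝓞 K) n : ℝ) * (n : ℝ) ^ (-s) := by
  refine (LSeriesSummable_ofReal_iff (by linarith)).mp (LSeriesSummable_of_tendsto_sub_one_mul
    (Complex.ofReal_ne_zero.mpr (dedekindZeta_residue_ne_zero K)) ?_ (by simpa using hs))
  rw [← dedekindZeta_eq_LSeries_idealCount]
  exact tendsto_sub_one_mul_dedekindZeta_nhdsGT K

lemma tendsto_sub_one_mul_tsum_idealCount :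
    Tendsto (fun s : ℝ => (s - 1) * ∑' n : ℕ, (idealCount (𝓞 K) n : ℝ) * (n : ℝ) ^ (-s))
      (𝓝[>] 1) (𝓝 (dedekindZeta_residue K)) := by
  refine ((Complex.continuous_re.tendsto _).comp
    (tendsto_sub_one_mul_dedekindZeta_nhdsGT K)).congr' ?_
  filter_upwards [self_mem_nhdsWithin] with s (hs : 1 < s)
  rw [Function.comp_apply, dedekindZeta_eq_LSeries_idealCount, LSeries_ofReal _ (by linarith)]
  norm_cast

lemma exists_tendsto_tsum_primes_idealCount_add_log_sub_one :
    ∃ M, Tendsto (fun s : ℝ =>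
        ∑' p : Nat.Primes, idealCount (𝓞 K) p * (p : ℝ) ^ (-s) + Real.log (s - 1))
      (𝓝[>] 1) (𝓝 M) := by
  refine exists_tendsto_tsum_primes_add_log_sub_one (a := fun n => (idealCount (𝓞 K) n : ℝ))
    (B := fun k => ((k : ℝ) + 1) ^ Module.finrank ℤ (𝓞 K)) (dedekindZeta_residue_pos K)
    (fun n => Nat.cast_nonneg _) (by simp [idealCount_one]) ?_ ?_ ?_
    (fun s hs => summable_idealCount_mul_rpow_neg K hs) (tendsto_sub_one_mul_tsum_idealCount K)
  · exact fun m n h => by exact_mod_cast idealCount_mul_of_coprime h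
  · exact fun p hp k => by exact_mod_cast idealCount_prime_pow_le hp k
  · have h := (summable_nat_add_iff 1).2 (summable_pow_mul_geometric_of_norm_lt_one (R := ℝ)
      (Module.finrank ℤ (𝓞 K)) (r := 1 / 2) (by norm_num))
    refine (h.mul_left 2).congr fun k => ?_
    push_cast
    ring

end DedekindZeta

section DedekindKummer

open Polynomial NumberField

/-- The number `ω(p)` of solutions of `g(x) ≡ 0 (mod p)`, counted on the representatives
`0 ≤ x < p`. -/
def rootCountMod (g : ℤ[X]) (p : ℕ) : ℕ :=
  ((Finset.range p).filter fun x : ℕ => (p : ℤ) ∣ g.eval (x : ℤ)).card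

lemma isRoot_map_natCast_iff (g : ℤ[X]) (p x : ℕ) :
    (g.map (Int.castRingHom (ZMod p))).IsRoot (x : ZMod p) ↔ (p : ℤ) ∣ g.eval (x : ℤ) := by
  rw [← ZMod.intCast_zmod_eq_zero_iff_dvd, IsRoot, ← Int.cast_natCast x, ← eq_intCast
    (Int.castRingHom (ZMod p)), eval_map_apply, eq_intCast]

lemma rootCountMod_eq_card_isRoot (g : ℤ[X]) (p : ℕ) [NeZero p] :
    rootCountMod g p =
      Nat.card {c : ZMod p // (g.map (Int.castRingHom (ZMod p))).IsRoot c} := by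
  classical
  rw [Nat.card_eq_fintype_card, Fintype.card_subtype, rootCountMod]
  refine Finset.card_nbij' (fun x => (x : ZMod p)) ZMod.val ?_ ?_ ?_ ?_
  · intro x hx
    exact Finset.mem_filter.mpr ⟨Finset.mem_univ _,
      (isRoot_map_natCast_iff g p x).mpr (Finset.mem_filter.mp hx).2⟩
  · intro c hc
    refine Finset.mem_filter.mpr ⟨Finset.mem_range.mpr c.val_lt, ?_⟩
    rw [← isRoot_map_natCast_iff, ZMod.natCast_zmod_val]
    exact (Finset.mem_filter.mp hc).2
  · intro x hx
    exact ZMod.val_cast_of_lt (Finset.mem_range.mp (Finset.mem_filter.mp hx).1)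
  · exact fun c _ => ZMod.natCast_zmod_val c

lemma card_isRoot_eq_card_linear_normalizedFactors {F : Type*} [Field F] [DecidableEq F]
    {G : F[X]} (hG : G ≠ 0) :
    Nat.card {c : F // G.IsRoot c} = Nat.card {Q : F[X] //
      Q ∈ UniqueFactorizationMonoid.normalizedFactors G ∧ Q.natDegree = 1} := by
  have hmem (Q : F[X]) := Polynomial.mem_normalizedFactors_iff (p := Q) hG
  refine Nat.card_congr (Equiv.ofBijective (fun c => ⟨X - C c.1, (hmem _).mpr
    ⟨irreducible_X_sub_C _, monic_X_sub_C _, dvd_iff_isRoot.mpr c.2⟩, natDegree_X_sub_C _⟩)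
    ⟨?_, ?_⟩)
  · rintro ⟨c, hc⟩ ⟨d, hd⟩ h
    simpa using h
  · rintro ⟨Q, hQ, hdeg⟩
    obtain ⟨-, hmonic, hdvd⟩ := (hmem Q).mp hQ
    have hQX : X - C (-Q.coeff 0) = Q := by
      rw [C_neg, sub_neg_eq_add, ← hmonic.eq_X_add_C hdeg]
    exact ⟨⟨-Q.coeff 0, by rwa [← dvd_iff_isRoot, hQX]⟩, Subtype.ext hQX⟩

lemma idealCount_prime_eq_card_primesOver {S : Type*} [CommRing S] [IsDedekindDomain S]
    [Module.Free ℤ S] {p : ℕ} (hp : p.Prime) :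
    idealCount S p =
      Nat.card {P : Ideal.primesOver (Ideal.span {(p : ℤ)}) S // Ideal.absNorm P.1 = p} := by
  refine (Nat.card_congr (Equiv.subtypeSubtypeEquivSubtype fun {I} hI => ?_)).symm
  refine (mem_primesOver_span_natCast_iff hp).mpr
    ⟨Ideal.isPrime_of_irreducible_absNorm (hI ▸ hp), ?_⟩
  simpa only [hI] using Ideal.absNorm_mem I

variable {K : Type*} [Field K] [NumberField K] {θ : 𝓞 K} {p : ℕ} [Fact p.Prime]

lemma absNorm_eq_pow_natDegree_monicFactor (h : ¬ p ∣ RingOfIntegers.exponent θ)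
    (P : Ideal.primesOver (Ideal.span {(p : ℤ)}) (𝓞 K)) :
    Ideal.absNorm P.1 =
      p ^ (NumberField.Ideal.primesOverSpanEquivMonicFactorsMod h P).1.natDegree := by
  have := P.2.1
  have := P.2.2
  have hdeg := NumberField.Ideal.inertiaDeg_primesOverSpanEquivMonicFactorsMod_symm_apply' h
    (NumberField.Ideal.primesOverSpanEquivMonicFactorsMod h P).2
  rw [← hdeg, Subtype.coe_eta, Equiv.symm_apply_apply, Ideal.pow_inertiaDeg]

theorem idealCount_eq_rootCountMod_minpoly (h : ¬ p ∣ RingOfIntegers.exponent θ) :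
    idealCount (𝓞 K) p = rootCountMod (minpoly ℤ θ) p := by
  have hp : p.Prime := Fact.out
  have hmin : (minpoly ℤ θ).map (Int.castRingHom (ZMod p)) ≠ 0 :=
    map_monic_ne_zero (minpoly.monic θ.isIntegral)
  rw [idealCount_prime_eq_card_primesOver hp, rootCountMod_eq_card_isRoot,
    card_isRoot_eq_card_linear_normalizedFactors hmin]
  have hnorm (P : Ideal.primesOver (Ideal.span {(p : ℤ)}) (𝓞 K)) : Ideal.absNorm P.1 = p ↔
      (NumberField.Ideal.primesOverSpanEquivMonicFactorsMod h P).1.natDegree = 1 := by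
    rw [absNorm_eq_pow_natDegree_monicFactor h, Nat.pow_eq_self_iff hp.one_lt]
  have hlinear (Q : (ZMod p)[X]) :
      Q ∈ RingOfIntegers.monicFactorsMod θ p ∧ Q.natDegree = 1 ↔
        Q ∈ UniqueFactorizationMonoid.normalizedFactors
          ((minpoly ℤ θ).map (Int.castRingHom (ZMod p))) ∧ Q.natDegree = 1 := by
    rw [Multiset.mem_toFinset]
  exact Nat.card_congr
    ((((NumberField.Ideal.primesOverSpanEquivMonicFactorsMod h).subtypeEquiv
      (q := fun Q => Q.1.natDegree = 1) hnorm).trans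
        (Equiv.subtypeSubtypeEquivSubtypeInter (· ∈ RingOfIntegers.monicFactorsMod θ p)
          fun Q => Q.natDegree = 1)).trans (Equiv.subtypeEquivRight hlinear))

end DedekindKummer

section PrimitiveElement

open Polynomial NumberField

lemma aeval_derivative_minpoly_ne_zero {R S : Type*} [CommRing R] [IsDomain R]
    [IsIntegrallyClosed R] [CharZero R] [CommRing S] [IsDomain S] [Algebra R S]
    [Module.IsTorsionFree R S] {x : S} (hx : IsIntegral R x) :
    aeval x (derivative (minpoly R x)) ≠ 0 := by
  have hdeg := minpoly.natDegree_pos hx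
  intro h
  have hdvd := minpoly.isIntegrallyClosed_dvd hx h
  refine absurd (natDegree_le_of_dvd hdvd fun h0 => ?_)
    (natDegree_derivative_lt hdeg.ne').not_ge
  exact hdeg.ne' (derivative_eq_zero.mp h0)

lemma exponent_ne_zero_of_adjoin_eq_top {K : Type*} [Field K] [NumberField K] {θ : 𝓞 K}
    (hθ : Algebra.adjoin ℚ {(θ : K)} = ⊤) : RingOfIntegers.exponent θ ≠ 0 := by
  have hconductor : conductor ℤ θ ≠ ⊥ := by
    intro hbot
    have hdiff := conductor_mul_differentIdeal ℤ ℚ K θ hθ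
    rw [hbot, Ideal.bot_mul] at hdiff
    exact aeval_derivative_minpoly_ne_zero θ.isIntegral (Ideal.span_singleton_eq_bot.mp hdiff.symm)
  rw [RingOfIntegers.exponent, Ne, Ideal.absNorm_eq_zero_iff]
  exact fun hbot => hconductor (Ideal.eq_bot_of_comap_eq_bot hbot)

lemma exists_numberField_minpoly_eq {g : ℤ[X]} (hm : g.Monic) (hirr : Irreducible g) :
    ∃ (K : Type) (_ : Field K) (_ : NumberField K) (θ : 𝓞 K),
      minpoly ℤ θ = g ∧ Algebra.adjoin ℚ {(θ : K)} = ⊤ := by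
  set G := g.map (algebraMap ℤ ℚ)
  have hG : Irreducible G := (hm.irreducible_iff_irreducible_map_fraction_map).mp hirr
  have := Fact.mk hG
  let K := AdjoinRoot G
  have : FiniteDimensional ℚ K := (AdjoinRoot.powerBasis hG.ne_zero).finite
  have : NumberField K := { to_charZero := algebraRat.charZero K, to_finiteDimensional := this }
  let α : K := AdjoinRoot.root G
  have hα : aeval α G = 0 := (AdjoinRoot.aeval_eq G).trans AdjoinRoot.mk_self
  have hαint : IsIntegral ℤ α := ⟨g, hm, by rwa [aeval_map_algebraMap] at hα⟩
  let θ : 𝓞 K := ⟨α, hαint⟩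
  have hmin : minpoly ℤ α = g := by
    refine map_injective _ (algebraMap ℤ ℚ).injective_int ?_
    rw [← minpoly.isIntegrallyClosed_eq_field_fractions' ℚ hαint]
    exact (minpoly.eq_of_irreducible_of_monic hG hα (hm.map _)).symm
  exact ⟨K, inferInstance, this, θ,
    (minpoly.algebraMap_eq RingOfIntegers.coe_injective θ).symm.trans hmin,
    AdjoinRoot.adjoinRoot_eq_top⟩

end PrimitiveElement

section PrimeSums

lemma tsum_primes_mul_rpow_neg_one_add (c : ℕ → ℝ) (s : ℝ) :
    ∑' p : Nat.Primes, c p * (p : ℝ) ^ (-(1 + s)) =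
      ∑' n : ℕ, (if n.Prime then c n / n else 0) * (n : ℝ) ^ (-s) := by
  refine (tsum_subtype {p : ℕ | p.Prime} fun n => c n * (n : ℝ) ^ (-(1 + s))).trans
    (tsum_congr fun n => ?_)
  by_cases hn : n.Prime
  · have hn0 : (0 : ℝ) < n := by exact_mod_cast hn.pos
    rw [Set.indicator_of_mem (Set.mem_ofPred.2 hn), if_pos hn, neg_add, Real.rpow_add hn0,
      Real.rpow_neg_one, ← mul_assoc, div_eq_mul_inv]
  · rw [Set.indicator_of_notMem (mt Set.mem_ofPred.1 hn), if_neg hn, zero_mul]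

lemma summable_ite_prime_div_mul_rpow_neg {c : ℕ → ℝ} {C : ℝ} (hc : ∀ p, p.Prime → |c p| ≤ C)
    {s : ℝ} (hs : 0 < s) :
    Summable fun n : ℕ => (if n.Prime then c n / n else 0) * (n : ℝ) ^ (-s) := by
  have hsum : Summable fun n : ℕ => C * (n : ℝ) ^ (-(1 + s)) :=
    (Real.summable_nat_rpow.2 (by linarith)).mul_left C
  refine hsum.of_norm_bounded_eventually_nat ?_
  filter_upwards [eventually_gt_atTop 0] with n hn
  have hn0 : (0 : ℝ) < n := by exact_mod_cast hn
  have hC : 0 ≤ C := (abs_nonneg _).trans (hc 2 Nat.prime_two)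
  split_ifs with hp
  · rw [neg_add, Real.rpow_add hn0, Real.rpow_neg_one, ← mul_assoc, ← div_eq_mul_inv, norm_mul,
      norm_div, Real.norm_natCast, Real.norm_of_nonneg (Real.rpow_nonneg hn0.le _)]
    gcongr
    exact hc n hp
  · rw [zero_mul, norm_zero]
    positivity

theorem tendsto_sum_primes_div_of_tendsto_tsum_primes_mul_rpow {c : ℕ → ℝ} {L C : ℝ}
    (hc : ∀ p, p.Prime → |c p| ≤ C)
    (hL : Tendsto (fun s : ℝ => ∑' p : Nat.Primes, c p * (p : ℝ) ^ (-s)) (𝓝[>] 1) (𝓝 L)) :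
    Tendsto (fun N : ℕ => ∑ p ∈ (Finset.range (N + 1)).filter Nat.Prime, c p / p)
      atTop (𝓝 L) := by
  simp only [Finset.sum_filter]
  refine tendsto_sum_range_of_tendsto_tsum_mul_rpow (C := C) (if_neg Nat.not_prime_zero) ?_
    (fun s hs => summable_ite_prime_div_mul_rpow_neg hc hs)
    ((hL.comp tendsto_one_add_nhdsGT).congr fun s => tsum_primes_mul_rpow_neg_one_add c s)
  intro n
  split_ifs with hn
  · rw [ArithmeticFunction.vonMangoldt_apply_prime hn, abs_div, Nat.abs_cast, div_mul_eq_mul_div,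
      ← mul_div_assoc]
    gcongr
    exact hc n hn
  · have hC : 0 ≤ C := (abs_nonneg _).trans (hc 2 Nat.prime_two)
    rw [abs_zero, zero_mul]
    exact mul_nonneg hC (div_nonneg ArithmeticFunction.vonMangoldt_nonneg n.cast_nonneg)

lemma exists_tendsto_sum_filter_range_of_finite_ne {M : Type*} [AddCommGroup M]
    [TopologicalSpace M] [ContinuousAdd M] {P : ℕ → Prop} [DecidablePred P] {f g : ℕ → M}
    (hfg : {n | P n ∧ f n ≠ g n}.Finite)
    (hg : ∃ L, Tendsto (fun N => ∑ n ∈ (Finset.range (N + 1)).filter P, g n) atTop (𝓝 L)) :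
    ∃ L, Tendsto (fun N => ∑ n ∈ (Finset.range (N + 1)).filter P, f n) atTop (𝓝 L) := by
  obtain ⟨L, hL⟩ := hg
  have hdiff : HasSum (fun n => if P n then f n - g n else 0)
      (∑ n ∈ hfg.toFinset, if P n then f n - g n else 0) := by
    refine hasSum_sum_of_ne_finset_zero fun n hn => ?_
    rw [Set.Finite.mem_toFinset, Set.mem_ofPred_eq, not_and_not_right] at hn
    exact ite_eq_right_iff.2 fun hP => sub_eq_zero.2 (hn hP)
  refine ⟨_, (hL.add (hdiff.tendsto_sum_nat.comp (tendsto_add_atTop_nat 1))).congr fun N => ?_⟩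
  rw [Function.comp_apply, ← Finset.sum_filter, ← Finset.sum_add_distrib]
  exact Finset.sum_congr rfl fun n _ => add_sub_cancel _ _

open NumberField

lemma exists_tendsto_tsum_primes_idealCount_sub_one_mul_rpow (K : Type*) [Field K] [NumberField K] :
    ∃ L, Tendsto (fun s : ℝ => ∑' p : Nat.Primes, ((idealCount (𝓞 K) p : ℝ) - 1) * (p : ℝ) ^ (-s))
      (𝓝[>] 1) (𝓝 L) := by
  obtain ⟨M, hM⟩ := exists_tendsto_tsum_primes_idealCount_add_log_sub_one K
  obtain ⟨M', hM'⟩ := exists_tendsto_tsum_primes_rpow_add_log_sub_one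
  refine ⟨M - M', (hM.sub hM').congr' ?_⟩
  filter_upwards [self_mem_nhdsWithin] with s (hs : 1 < s)
  have hK : Summable fun p : Nat.Primes => (idealCount (𝓞 K) p : ℝ) * (p : ℝ) ^ (-s) :=
    (summable_idealCount_mul_rpow_neg K hs).subtype _
  have hℚ : Summable fun p : Nat.Primes => (p : ℝ) ^ (-s) :=
    Nat.Primes.summable_rpow.2 (by linarith)
  simp only [sub_mul, one_mul]
  rw [hK.tsum_sub hℚ, add_sub_add_right_eq_sub]

theorem exists_tendsto_sum_primes_idealCount_sub_one_div (K : Type*) [Field K] [NumberField K] :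
    ∃ L, Tendsto (fun N : ℕ => ∑ p ∈ (Finset.range (N + 1)).filter Nat.Prime,
      ((idealCount (𝓞 K) p : ℝ) - 1) / p) atTop (𝓝 L) := by
  obtain ⟨L, hL⟩ := exists_tendsto_tsum_primes_idealCount_sub_one_mul_rpow K
  refine ⟨L, tendsto_sum_primes_div_of_tendsto_tsum_primes_mul_rpow
    (C := 2 ^ Module.finrank ℤ (𝓞 K)) (fun p hp => ?_) hL⟩
  have hle : (idealCount (𝓞 K) p : ℝ) ≤ 2 ^ Module.finrank ℤ (𝓞 K) := by
    exact_mod_cast (pow_one p ▸ idealCount_prime_pow_le (S := 𝓞 K) hp 1)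
  have hone : (1 : ℝ) ≤ 2 ^ Module.finrank ℤ (𝓞 K) := one_le_pow₀ one_le_two
  rw [abs_le]
  constructor <;> linarith [Nat.cast_nonneg (α := ℝ) (idealCount (𝓞 K) p)]

end PrimeSums

/-- For a monic irreducible `g ∈ ℤ[x]`, writing `ω(p)` for the number of roots of `g`
modulo `p`, the sum `∑_p (ω(p) − 1)/p` over primes converges. -/
theorem sum_omega_sub_one_div_p_converges (g : Polynomial ℤ) (hm : g.Monic)
    (hirr : Irreducible g) :
    ∃ L : ℝ, Tendsto (fun N : ℕ =>
        ∑ p ∈ (Finset.range (N + 1)).filter Nat.Prime,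
          ((((Finset.range p).filter fun x : ℕ => (p : ℤ) ∣ g.eval (x : ℤ)).card : ℝ) - 1) / p)
      atTop (nhds L) := by
  obtain ⟨K, _, _, θ, rfl, hθ⟩ := exists_numberField_minpoly_eq hm hirr
  refine exists_tendsto_sum_filter_range_of_finite_ne ?_
    (exists_tendsto_sum_primes_idealCount_sub_one_div K)
  refine (RingOfIntegers.exponent θ).primeFactors.finite_toSet.subset fun p ⟨hp, hne⟩ => ?_
  refine Nat.mem_primeFactors.2 ⟨hp, ?_, exponent_ne_zero_of_adjoin_eq_top hθ⟩
  contrapose! hne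
  have := Fact.mk hp
  rw [idealCount_eq_rootCountMod_minpoly hne, rootCountMod]
end
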